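/- For every ε > 0 there exists δ > 0 with the following property: if (n,u,φ) is a global classical L²-compact solution of the 1D Euler–Poisson system (EPw), with shift function y ∈ C¹(ℝ,ℝ), which conserves the energy E and satisfies inf_{t∈ℝ} |y'(t)| > √(1+k) + ε and sup_{t∈ℝ} (‖n(t)‖_{H¹} + ‖u(t)‖_{H¹}) < δ, then (n,u,φ) is identically zero. -/

import Mathlib

open MeasureTheory Real
open scoped ENNReal

noncomputable section

def sech (x : ℝ) : ℝ := (Real.cosh x)⁻¹

def qfun (x : ℝ) : ℝ := Real.exp x - 1

structure IsPressure (p : ℝ → ℝ) : Prop where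
  smooth : ContDiffOn ℝ (⊤ : ℕ∞) p (Set.Ioi (0 : ℝ))
  deriv_pos : ∀ s : ℝ, 0 < s → 0 < deriv p s
  deriv2_nonneg : ∀ s : ℝ, 0 < s → 0 ≤ deriv (deriv p) s

def IsWFor (p w : ℝ → ℝ) : Prop :=
  w 0 = 0 ∧ ∀ s : ℝ, -1 < s → HasDerivAt w (deriv p (1 + s) / (1 + s)) s

def Wfun (w : ℝ → ℝ) (a : ℝ) : ℝ := ∫ s in (0:ℝ)..a, w s

def Rfun (x : ℝ) : ℝ := x * qfun x - ∫ s in (0:ℝ)..x, qfun s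

def energyDensity (w : ℝ → ℝ) (n u φ : ℝ → ℝ) (x : ℝ) : ℝ :=
  (1/2) * (1 + n x) * u x ^ 2 + Wfun w (n x) + (1/2) * (deriv φ x) ^ 2 + Rfun (φ x)

def energy (w : ℝ → ℝ) (n u φ : ℝ → ℝ) : ℝ := ∫ x : ℝ, energyDensity w n u φ x

structure IsEPwSolution (w : ℝ → ℝ) (n u φ : ℝ → ℝ → ℝ) : Prop where
  dens_pos : ∀ t x : ℝ, 0 < 1 + n t x
  reg_n : ContDiff ℝ 1 (Function.uncurry n)
  reg_u : ContDiff ℝ 1 (Function.uncurry u)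
  reg_phi_space : ∀ t : ℝ, ContDiff ℝ 2 (φ t)
  reg_phi_time : ∀ x : ℝ, ContDiff ℝ 1 (fun t => φ t x)
  eq_n : ∀ t x : ℝ, deriv (fun s => n s x) t = - deriv (fun z => (1 + n t z) * u t z) x
  eq_u : ∀ t x : ℝ, deriv (fun s => u s x) t
      = - deriv (fun z => u t z ^ 2 / 2 + w (n t z) + φ t z) x
  eq_phi : ∀ t x : ℝ, - deriv (deriv (φ t)) x + qfun (φ t x) = n t x

def ConservesEnergy (w : ℝ → ℝ) (n u φ : ℝ → ℝ → ℝ) : Prop :=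
  ∀ t₁ t₂ : ℝ, energy w (n t₁) (u t₁) (φ t₁) = energy w (n t₂) (u t₂) (φ t₂)

def L2CompactWith (n u : ℝ → ℝ → ℝ) (y : ℝ → ℝ) : Prop :=
  ∀ ε : ℝ, 0 < ε → ∃ R : ℝ, 0 < R ∧
    ∀ t : ℝ, (∫ x in {x : ℝ | R < |x - y t|}, (n t x ^ 2 + u t x ^ 2)) < ε

/-- the (squared-sum) `H¹` Sobolev norm, valued in `ℝ≥0∞` -/
def H1norm (f : ℝ → ℝ) : ℝ≥0∞ :=
  (eLpNorm f 2 volume ^ 2 + eLpNorm (deriv f) 2 volume ^ 2) ^ (1/2 : ℝ)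




/-! ### Analysis tools -/

lemma tool_int_dom {F S : ℝ → ℝ} (hF : Continuous F) (hS : Integrable S) (C : ℝ)
    (h : ∀ x, |F x| ≤ C * S x) : Integrable F := by
  refine (hS.const_mul C).mono' hF.aestronglyMeasurable ?_
  exact Filter.Eventually.of_forall (fun x => by simpa using h x)

lemma tool_int_zero {F f : ℝ → ℝ} (hd : ∀ x, HasDerivAt F (f x) x) (hf : Integrable f)
    (hF : Integrable F) : ∫ x, f x = 0 :=
  integral_eq_zero_of_hasDerivAt_of_integrable hd hf hF

lemma tool_fubini {f : ℝ → ℝ → ℝ} (hc : Continuous (Function.uncurry f)) {s t : ℝ} (hst : s ≤ t)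
    (C : ℝ) (hi : ∀ τ, Integrable (f τ)) (hb : ∀ τ, ∫ x, |f τ x| ≤ C) :
    Integrable (fun x => ∫ τ in s..t, f τ x) ∧
    (∫ x, ∫ τ in s..t, f τ x) = (∫ τ in s..t, ∫ x, f τ x) ∧
    IntervalIntegrable (fun τ => ∫ x, f τ x) volume s t := by
  have hI : Integrable (Function.uncurry f) ((volume.restrict (Set.uIoc s t)).prod volume) := by
    rw [integrable_prod_iff hc.aestronglyMeasurable]
    refine ⟨Filter.Eventually.of_forall (fun τ => hi τ), ?_⟩
    have hm : AEStronglyMeasurable (fun τ => ∫ y, ‖Function.uncurry f (τ, y)‖)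
        (volume.restrict (Set.uIoc s t)) :=
      (hc.norm.aestronglyMeasurable (μ := (volume.restrict (Set.uIoc s t)).prod volume)).integral_prod_right'
    refine Integrable.mono' (g := fun _ => C) ?_ hm ?_
    · rw [Set.uIoc_of_le hst]
      exact integrableOn_const (by simp) (by simp)
    · refine Filter.Eventually.of_forall (fun τ => ?_)
      rw [Real.norm_eq_abs, abs_of_nonneg (integral_nonneg (fun _ => norm_nonneg _))]
      exact hb τ
  refine ⟨?_, (intervalIntegral_integral_swap hI).symm, ?_⟩
  · have := hI.integral_prod_right
    simpa [intervalIntegral.integral_of_le hst, Set.uIoc_of_le hst] using this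
  · have := hI.integral_prod_left
    rw [intervalIntegrable_iff]
    exact this

lemma tool_swap {f : ℝ → ℝ → ℝ} (hc : Continuous (Function.uncurry f)) (s t a b : ℝ)  :
    (∫ x in a..b, ∫ τ in s..t, f τ x) = (∫ τ in s..t, ∫ x in a..b, f τ x) := by
  symm
  apply intervalIntegral_intervalIntegral_swap
  have h1 : IntegrableOn (Function.uncurry f) (Set.uIcc s t ×ˢ Set.uIcc a b)
      ((volume : Measure ℝ).prod volume) :=
    hc.continuousOn.integrableOn_compact (isCompact_uIcc.prod isCompact_uIcc)
  exact h1.mono_set (Set.prod_mono Set.uIoc_subset_uIcc Set.uIoc_subset_uIcc)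

lemma tool_antitone {V : ℝ → ℝ} {C : ℝ} (h : ∀ s t, s < t → V t - V s ≤ C * (t - s) ^ 2) :
    ∀ s t, s < t → V t ≤ V s := by
  intro s t hst
  have key : ∀ N : ℕ, V t - V s ≤ C * (t - s) ^ 2 / (N + 1) := by
    intro N
    have hN : (0:ℝ) < N + 1 := by positivity
    set g : ℕ → ℝ := fun i => V (s + i * ((t - s) / (N + 1))) with hg
    have h1 : ∑ i ∈ Finset.range (N + 1), (g (i + 1) - g i) = g (N + 1) - g 0 :=
      Finset.sum_range_sub g (N + 1)
    have h2 : ∑ i ∈ Finset.range (N + 1), (g (i + 1) - g i) ≤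
        ∑ i ∈ Finset.range (N + 1), C * ((t - s) / (N + 1)) ^ 2 := by
      refine Finset.sum_le_sum (fun i _ => ?_)
      have hp : 0 < (t - s) / (N + 1) := div_pos (by linarith) hN
      have := h (s + i * ((t - s) / (N + 1))) (s + (i + 1 : ℕ) * ((t - s) / (N + 1)))
        (by push_cast; linarith)
      have e : (s + (i + 1 : ℕ) * ((t - s) / (N + 1)) - (s + i * ((t - s) / (N + 1)))) =
        (t - s) / (N + 1) := by push_cast; ring
      rw [e] at this
      exact this
    rw [h1] at h2
    have h3 : g (N + 1) = V t := by
      simp only [hg]; congr 1; push_cast; field_simp; try ring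
    have h4 : g 0 = V s := by simp [hg]
    rw [h3, h4, Finset.sum_const, Finset.card_range] at h2
    refine h2.trans (le_of_eq ?_)
    rw [nsmul_eq_mul]; push_cast; field_simp
  have hlim : Filter.Tendsto (fun N : ℕ => C * (t - s) ^ 2 / ((N : ℝ) + 1)) Filter.atTop (nhds 0) := by
    have := tendsto_one_div_add_atTop_nhds_zero_nat (𝕜 := ℝ)
    have := this.const_mul (C * (t - s) ^ 2)
    simpa [mul_one_div, div_eq_mul_inv] using this
  have := ge_of_tendsto' hlim key
  linarith

lemma tool_sobolev {f g : ℝ → ℝ} (hd : ∀ x, HasDerivAt f (g x) x) (hg : Continuous g)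
    (hf2 : Integrable (fun x => f x ^ 2)) (hg2 : Integrable (fun x => g x ^ 2)) (x : ℝ) :
    f x ^ 2 ≤ (∫ x, f x ^ 2) + ∫ x, g x ^ 2 := by
  have hfc : Continuous f := continuous_iff_continuousAt.2 (fun x => (hd x).continuousAt)
  have hd2 : ∀ x, HasDerivAt (fun x => f x ^ 2) (2 * f x * g x) x := by
    intro x
    have := (hd x).pow 2
    exact this.congr_deriv (by push_cast; ring)
  have hi : Integrable (fun x => 2 * f x * g x) := by
    refine tool_int_dom (by fun_prop) (hf2.add hg2) 1 (fun x => ?_)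
    simp only [Pi.add_apply, one_mul]
    rw [abs_le]
    constructor <;> nlinarith [sq_nonneg (f x + g x), sq_nonneg (f x - g x)]
  have h0 : Filter.Tendsto (fun x => f x ^ 2) Filter.atBot (nhds 0) :=
    tendsto_zero_of_hasDerivAt_of_integrableOn_Iic (a := x) (fun x _ => hd2 x) hi.integrableOn
      hf2.integrableOn
  have h1 := integral_Iic_of_hasDerivAt_of_tendsto' (a := x) (fun x _ => hd2 x) hi.integrableOn h0
  have h2 : ∫ y in Set.Iic x, 2 * f y * g y ≤ ∫ y in Set.Iic x, (f y ^ 2 + g y ^ 2) := by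
    refine integral_mono hi.integrableOn (hf2.add hg2).integrableOn (fun y => ?_)
    simp only
    nlinarith [sq_nonneg (f y - g y)]
  have h3 : ∫ y in Set.Iic x, (f y ^ 2 + g y ^ 2) ≤ ∫ y, (f y ^ 2 + g y ^ 2) := by
    refine setIntegral_le_integral (hf2.add hg2) (Filter.Eventually.of_forall (fun y => ?_))
    simp only [Pi.zero_apply]; positivity
  rw [integral_add hf2 hg2] at h3
  linarith

/-- Second-order Taylor control from a derivative bound. -/
lemma tool_taylor {G g : ℝ → ℝ} {β θ d : ℝ} (h0 : G 0 = 0)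
    (hG : ∀ a, |a| ≤ d → HasDerivAt G (g a) a) (hg : ∀ a, |a| ≤ d → |g a - β * a| ≤ θ * |a|)
    (a : ℝ) (ha : |a| ≤ d) : |G a - β * a ^ 2 / 2| ≤ θ / 2 * a ^ 2 := by
  have key : ∀ s ∈ Set.Icc (0:ℝ) 1, |(G (s * a) - β * (s * a) ^ 2 / 2)| ≤ θ / 2 * (s * a) ^ 2 := by
    intro s hs
    have hsa : ∀ r ∈ Set.Icc (0:ℝ) 1, |r * a| ≤ d := by
      intro r hr
      rw [abs_mul, abs_of_nonneg hr.1]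
      have := abs_nonneg a
      nlinarith [hr.2]
    have hd : ∀ r ∈ Set.Icc (0:ℝ) 1, HasDerivAt (fun r => G (r * a) - β * (r * a) ^ 2 / 2)
        ((g (r * a) - β * (r * a)) * a) r := by
      intro r hr
      have h1 : HasDerivAt (fun r : ℝ => r * a) a r := by simpa using (hasDerivAt_id r).mul_const a
      have h2 := (hG (r * a) (hsa r hr)).comp r h1
      have h3 := ((h1.pow 2).const_mul β).div_const 2
      exact (h2.sub h3).congr_deriv (by push_cast; ring)
    have hB : ∀ r, HasDerivAt (fun r : ℝ => θ / 2 * (r * a) ^ 2) (θ * r * a ^ 2) r := by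
      intro r
      have h1 : HasDerivAt (fun r : ℝ => r * a) a r := by simpa using (hasDerivAt_id r).mul_const a
      have h3 := ((h1.pow 2).const_mul (θ / 2))
      exact h3.congr_deriv (by push_cast; ring)
    have := image_norm_le_of_norm_deriv_right_le_deriv_boundary
      (f := fun r => G (r * a) - β * (r * a) ^ 2 / 2) (a := 0) (b := 1)
      (f' := fun r => (g (r * a) - β * (r * a)) * a)
      (B := fun r : ℝ => θ / 2 * (r * a) ^ 2) (B' := fun r => θ * r * a ^ 2)
      (fun r hr => (hd r hr).continuousAt.continuousWithinAt)
      (fun r hr => (hd r ⟨hr.1, hr.2.le⟩).hasDerivWithinAt)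
      (by simp [h0]) (fun r => hB r) (fun r hr => by
        rw [norm_mul, Real.norm_eq_abs, Real.norm_eq_abs]
        have h4 := hg (r * a) (hsa r ⟨hr.1, hr.2.le⟩)
        rw [abs_mul r, abs_of_nonneg hr.1] at h4
        have h5 := mul_le_mul_of_nonneg_right h4 (abs_nonneg a)
        have h6 : |a| * |a| = a ^ 2 := by rw [← sq, sq_abs]
        calc |g (r * a) - β * (r * a)| * |a| ≤ θ * (r * |a|) * |a| := h5
          _ = θ * r * (|a| * |a|) := by ring
          _ = _ := by rw [h6]) hs
    simpa using this
  simpa using key 1 ⟨zero_le_one, le_rfl⟩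

/-! ### Exponential inequalities -/

lemma tool_exp_lower {a b : ℝ} (ha : |a| ≤ 1/2) (hb : |b| ≤ 1/2) :
    (a - b) ^ 2 / 2 ≤ (a - b) * (exp a - exp b) := by
  rw [abs_le] at ha hb
  have e1 : exp a - exp b ≥ exp b * (a - b) := by
    have := add_one_le_exp (a - b)
    have h2 : exp a = exp b * exp (a - b) := by rw [← exp_add]; ring_nf
    nlinarith [exp_pos b]
  have e2 : exp b - exp a ≥ exp a * (b - a) := by
    have := add_one_le_exp (b - a)
    have h2 : exp b = exp a * exp (b - a) := by rw [← exp_add]; ring_nf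
    nlinarith [exp_pos a]
  have h1 := add_one_le_exp a
  have h2 := add_one_le_exp b
  rcases le_total b a with h | h
  · nlinarith [mul_nonneg (sub_nonneg.2 h) (sub_nonneg.2 h)]
  · nlinarith [mul_nonneg (sub_nonneg.2 h) (sub_nonneg.2 h)]

lemma tool_exp_le_two {a : ℝ} (ha : |a| ≤ 1/2) : exp a ≤ 2 := by
  rw [abs_le] at ha
  have := add_one_le_exp (-a)
  have h2 : exp a * exp (-a) = 1 := by rw [← exp_add]; simp
  nlinarith [exp_pos a]

lemma tool_exp_upper {a b : ℝ} (ha : |a| ≤ 1/2) (hb : |b| ≤ 1/2) :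
    |exp a - exp b| ≤ 2 * |a - b| := by
  have e1 : exp a - exp b ≥ exp b * (a - b) := by
    have := add_one_le_exp (a - b)
    have h2 : exp a = exp b * exp (a - b) := by rw [← exp_add]; ring_nf
    nlinarith [exp_pos b]
  have e2 : exp b - exp a ≥ exp a * (b - a) := by
    have := add_one_le_exp (b - a)
    have h2 : exp b = exp a * exp (b - a) := by rw [← exp_add]; ring_nf
    nlinarith [exp_pos a]
  have h1 := tool_exp_le_two ha
  have h2 := tool_exp_le_two hb
  rcases le_total b a with h | h
  · rw [abs_of_nonneg (sub_nonneg.2 h), abs_le]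
    constructor <;> nlinarith [exp_pos a, exp_pos b, exp_le_exp.2 h]
  · rw [abs_of_nonpos (sub_nonpos.2 h), abs_le]
    constructor <;> nlinarith [exp_pos a, exp_pos b, exp_le_exp.2 h]



/-! ### Boundedness of the potential -/

lemma tool_mono {g g' : ℝ → ℝ} (hg : ∀ x, HasDerivAt g (g' x) x) {a b c : ℝ} (hab : a ≤ b)
    (h : ∀ x, a < x → x < b → c ≤ g' x) : c * (b - a) ≤ g b - g a := by
  rcases hab.eq_or_lt with rfl | hlt
  · simp
  · obtain ⟨ξ, hξ, he⟩ := exists_hasDerivAt_eq_slope g g' hlt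
      (fun x _ => (hg x).continuousAt.continuousWithinAt) (fun x _ => hg x)
    have h1 := h ξ hξ.1 hξ.2
    rw [he, le_div_iff₀ (by linarith)] at h1
    exact h1

lemma ode_growth {f f1 f2 : ℝ → ℝ} (h1 : ∀ x, HasDerivAt f (f1 x) x)
    (h2 : ∀ x, HasDerivAt f1 (f2 x) x) {m c x1 : ℝ} (hc : 0 < c) (hm : ∀ x, m ≤ f x → c ≤ f2 x)
    (ha : m ≤ f x1) (hb : 0 < f1 x1) : ∀ x, x1 ≤ x → c * (x - x1) ≤ f1 x := by
  have hf1c : Continuous f1 := continuous_iff_continuousAt.2 (fun x => (h2 x).continuousAt)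
  have hpos : ∀ x, x1 ≤ x → 0 < f1 x := by
    intro x2 hx2
    by_contra hneg
    push Not at hneg
    set T := Set.Icc x1 x2 ∩ {x | f1 x ≤ 0} with hT
    have hTc : IsCompact T := isCompact_Icc.inter_right (isClosed_le hf1c continuous_const)
    have hTn : T.Nonempty := ⟨x2, ⟨hx2, le_rfl⟩, hneg⟩
    have hz := hTc.sInf_mem hTn
    set ζ := sInf T
    have hbelow : ∀ x, x1 ≤ x → x < ζ → 0 < f1 x := by
      intro x hx hxz
      by_contra hcon
      push Not at hcon
      have : ζ ≤ x := csInf_le hTc.bddBelow ⟨⟨hx, hxz.le.trans hz.1.2⟩, hcon⟩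
      linarith
    have hfm : ∀ x, x1 ≤ x → x ≤ ζ → m ≤ f x := by
      intro x hx hxz
      have := tool_mono (c := 0) h1 hx (fun y hy1 hy2 => (hbelow y hy1.le (hy2.trans_le hxz)).le)
      linarith
    have := tool_mono (c := c) h2 hz.1.1 (fun y hy1 hy2 => hm y (hfm y hy1.le hy2.le))
    have h3 := hz.2
    simp only [Set.mem_ofPred_eq] at h3
    have h4 : 0 ≤ c * (ζ - x1) := mul_nonneg hc.le (by linarith [hz.1.1])
    linarith
  intro x hx
  have hfm : ∀ x, x1 ≤ x → m ≤ f x := by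
    intro x hx
    have := tool_mono (c := 0) h1 hx (fun y hy1 hy2 => (hpos y hy1.le).le)
    linarith
  have := tool_mono (c := c) h2 hx (fun y hy1 hy2 => hm y (hfm y hy1.le))
  linarith

lemma pde_no_growth {U f G Ut f1 f2 : ℝ → ℝ → ℝ} {m c : ℝ} (hc : 0 < c)
    (hUtc : Continuous (Function.uncurry Ut)) (hf1c : Continuous (Function.uncurry f1))
    (hU : ∀ t x, HasDerivAt (fun s => U s x) (Ut t x) t)
    (hUc : ∀ t, Continuous (U t))
    (hG : ∀ t x, HasDerivAt (G t) (-Ut t x) x)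
    (h1 : ∀ t x, HasDerivAt (f t) (f1 t x) x)
    (h2 : ∀ t x, HasDerivAt (f1 t) (f2 t x) x)
    (hft : ∀ x, Continuous (fun t => f t x))
    (hm : ∀ t x, m ≤ f t x → c ≤ f2 t x)
    (hUb : ∀ t x, |U t x| ≤ 1) (hGb : ∀ t x, |G t x - f t x| ≤ 1) (t0 x1 : ℝ)
    (ha : m < f t0 x1) (hb : 0 < f1 t0 x1) : False := by
  have hf1t : Continuous (fun t => f1 t x1) :=
    hf1c.comp (by fun_prop : Continuous (fun t : ℝ => (t, x1)))
  have hev : ∀ᶠ t in nhds t0, m < f t x1 ∧ 0 < f1 t x1 :=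
    ((hft x1).continuousAt.eventually (lt_mem_nhds ha)).and
      (hf1t.continuousAt.eventually (lt_mem_nhds hb))
  obtain ⟨r, hr, hball⟩ := Metric.eventually_nhds_iff.1 hev
  set τ := r / 2 with hτ
  have hτ0 : 0 < τ := by positivity
  have hgood : ∀ t, t0 ≤ t → t ≤ t0 + τ → ∀ x, x1 ≤ x → c * (x - x1) ≤ f1 t x := by
    intro t ht1 ht2
    have := hball (y := t) (by rw [Real.dist_eq, abs_of_nonneg (by linarith)]; linarith)
    exact ode_growth (h1 t) (h2 t) hc (hm t) this.1.le this.2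
  set X := x1 + (2 + 4 / τ) / c with hX
  have hXx : x1 ≤ X := by rw [hX]; have : 0 ≤ (2 + 4 / τ) / c := by positivity
                          linarith
  have hcX : c * (X - x1) = 2 + 4 / τ := by rw [hX]; field_simp; ring
  have hGd : ∀ t, t0 ≤ t → t ≤ t0 + τ → 4 / τ ≤ G t (X + 1) - G t X := by
    intro t ht1 ht2
    have h3 := tool_mono (c := 2 + 4 / τ) (a := X) (b := X + 1) (h1 t) (by linarith)
      (fun y hy1 hy2 => by
        refine le_trans ?_ (hgood t ht1 ht2 y (by linarith))
        rw [← hcX]; exact mul_le_mul_of_nonneg_left (by linarith) hc.le)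
    have h4 := abs_le.1 (hGb t X)
    have h5 := abs_le.1 (hGb t (X + 1))
    have : 2 + 4 / τ ≤ f t (X + 1) - f t X := by nlinarith
    linarith [h4.1, h4.2, h5.1, h5.2]
  have hUtt : ∀ x, Continuous (fun t => Ut t x) := fun x =>
    hUtc.comp (by fun_prop : Continuous (fun t : ℝ => (t, x)))
  have hUtx : ∀ t, Continuous (Ut t) := fun t =>
    hUtc.comp (by fun_prop : Continuous (fun x : ℝ => (t, x)))
  have e1 : (∫ x in X..(X + 1), ∫ t in t0..(t0 + τ), Ut t x) =
      ∫ x in X..(X + 1), (U (t0 + τ) x - U t0 x) := by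
    refine intervalIntegral.integral_congr (fun x _ => ?_)
    exact intervalIntegral.integral_eq_sub_of_hasDerivAt (fun t _ => hU t x)
      ((hUtt x).intervalIntegrable _ _)
  have e2 : (∫ t in t0..(t0 + τ), ∫ x in X..(X + 1), Ut t x) =
      ∫ t in t0..(t0 + τ), -(G t (X + 1) - G t X) := by
    refine intervalIntegral.integral_congr (fun t _ => ?_)
    have := intervalIntegral.integral_eq_sub_of_hasDerivAt (a := X) (b := X + 1)
      (fun x _ => hG t x) ((hUtx t).neg.intervalIntegrable _ _)
    rw [intervalIntegral.integral_neg] at this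
    linarith
  have e3 := tool_swap hUtc t0 (t0 + τ) X (X + 1)
  have hii : IntervalIntegrable (fun t => -(G t (X + 1) - G t X)) volume t0 (t0 + τ) := by
    have : (fun t => -(G t (X + 1) - G t X)) = fun t => ∫ x in X..(X + 1), Ut t x := by
      funext t
      have := intervalIntegral.integral_eq_sub_of_hasDerivAt (a := X) (b := X + 1)
        (fun x _ => hG t x) ((hUtx t).neg.intervalIntegrable _ _)
      rw [intervalIntegral.integral_neg] at this
      linarith
    rw [this]
    apply Continuous.intervalIntegrable
    exact intervalIntegral.continuous_parametric_intervalIntegral_of_continuous' hUtc _ _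
  have e4 : (∫ t in t0..(t0 + τ), -(G t (X + 1) - G t X)) ≤ ∫ t in t0..(t0 + τ), -(4 / τ) := by
    refine intervalIntegral.integral_mono_on (by linarith) hii (by simp) (fun t ht => ?_)
    have := hGd t ht.1 ht.2
    linarith
  have e5 : (∫ x in X..(X + 1), (-2 : ℝ)) ≤ ∫ x in X..(X + 1), (U (t0 + τ) x - U t0 x) := by
    refine intervalIntegral.integral_mono_on (by linarith) (by simp)
      (((hUc _).sub (hUc _)).intervalIntegrable _ _) (fun x _ => ?_)
    have h4 := abs_le.1 (hUb (t0 + τ) x)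
    have h5 := abs_le.1 (hUb t0 x)
    linarith [h4.1, h5.2]
  rw [← e2, ← e3, e1] at e4
  have e6 := e5.trans e4
  simp only [intervalIntegral.integral_const, smul_eq_mul] at e6
  have : (t0 + τ - t0) * -(4 / τ) = -4 := by field_simp; ring
  rw [this] at e6
  norm_num at e6

/-- The potential of a solution of small amplitude is small. -/
lemma phi_bound {u φ H ut px n : ℝ → ℝ → ℝ} {d : ℝ} (hd0 : 0 < d) (hd : d ≤ 1/8)
    (cut : Continuous (Function.uncurry ut)) (cpx : Continuous (Function.uncurry px))
    (hut : ∀ t x, HasDerivAt (fun s => u s x) (ut t x) t)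
    (cu : ∀ t, Continuous (u t))
    (hH : ∀ t x, HasDerivAt (H t) (-ut t x) x)
    (hpx : ∀ t x, HasDerivAt (φ t) (px t x) x)
    (hpxx : ∀ t x, HasDerivAt (px t) (exp (φ t x) - 1 - n t x) x)
    (hφt : ∀ x, Continuous (fun t => φ t x))
    (bn : ∀ t x, |n t x| ≤ d) (bu : ∀ t x, |u t x| ≤ 1)
    (bH : ∀ t x, |H t x - φ t x| ≤ 1) : ∀ t x, |φ t x| ≤ 2 * d := by
  -- the four reflected versions at once
  have key : ∀ a b : ℝ, (a = 1 ∨ a = -1) → (b = 1 ∨ b = -1) → ∀ t z,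
      2 * d < a * φ t (b * z) → 0 < a * b * px t (b * z) → False := by
    intro a b ha hb t z h1 h2
    have hb2 : b * b = 1 := by rcases hb with rfl | rfl <;> norm_num
    have hab1 : |a| = 1 := by rcases ha with rfl | rfl <;> norm_num
    have hbb1 : |b| = 1 := by rcases hb with rfl | rfl <;> norm_num
    have hlin : ∀ z : ℝ, HasDerivAt (fun z : ℝ => b * z) b z := fun z => by
      simpa using (hasDerivAt_id z).const_mul b
    have hmap : Continuous (fun p : ℝ × ℝ => (p.1, b * p.2)) := by fun_prop
    refine pde_no_growth (U := fun t z => a * b * u t (b * z)) (f := fun t z => a * φ t (b * z))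
      (G := fun t z => a * H t (b * z)) (Ut := fun t z => a * b * ut t (b * z))
      (f1 := fun t z => a * b * px t (b * z))
      (f2 := fun t z => a * (exp (φ t (b * z)) - 1 - n t (b * z)))
      (m := 2 * d) (c := d / 2) (by positivity) ?_ ?_ ?_ ?_ ?_ ?_ ?_ ?_ ?_ ?_ ?_ t z h1 h2
    · exact continuous_const.mul (cut.comp hmap)
    · exact continuous_const.mul (cpx.comp hmap)
    · exact fun t x => (hut t (b * x)).const_mul (a * b)
    · exact fun t => continuous_const.mul ((cu t).comp (by fun_prop))
    · intro t x
      exact (((hH t (b * x)).comp x (hlin x)).const_mul a).congr_deriv (by ring)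
    · intro t x
      exact (((hpx t (b * x)).comp x (hlin x)).const_mul a).congr_deriv (by ring)
    · intro t x
      refine (((hpxx t (b * x)).comp x (hlin x)).const_mul (a * b)).congr_deriv ?_
      linear_combination a * (exp (φ t (b * x)) - 1 - n t (b * x)) * hb2
    · exact fun x => continuous_const.mul (hφt (b * x))
    · intro t x hx
      have hn := abs_le.1 (bn t (b * x))
      rcases ha with rfl | rfl
      · have := add_one_le_exp (φ t (b * x))
        simp only [one_mul] at hx ⊢
        linarith [hn.1, hn.2]
      · have hle : φ t (b * x) ≤ -(2 * d) := by linarith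
        have h3 := exp_le_exp.2 hle
        have h4 := add_one_le_exp (2 * d)
        have h5 : exp (2 * d) * exp (-(2 * d)) = 1 := by rw [← exp_add]; simp
        have h6 : (1 + 2 * d) * exp (-(2 * d)) ≤ 1 := by
          nlinarith [exp_pos (-(2 * d))]
        have h7 : exp (-(2 * d)) ≤ 1 - d - d / 2 + 0 * d := by
          by_contra hcon
          push Not at hcon
          nlinarith
        linarith [hn.1, hn.2]
    · intro t x
      rw [abs_mul, abs_mul, hab1, hbb1]
      simpa using bu t (b * x)
    · intro t x
      have := bH t (b * x)
      rw [← mul_sub, abs_mul, hab1]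
      simpa using this
  have key2 : ∀ a : ℝ, (a = 1 ∨ a = -1) → ∀ t x, 2 * d < a * φ t x → False := by
    intro a ha t x h1
    have hneg : ∀ z, 2 * d < a * φ t z → ¬ (0 < a * px t z) := fun z hz hz2 =>
      key a 1 ha (Or.inl rfl) t z (by simpa using hz) (by simpa using hz2)
    have hpos : ∀ z, 2 * d < a * φ t z → ¬ (a * px t z < 0) := fun z hz hz2 =>
      key a (-1) ha (Or.inr rfl) t (-z) (by simpa using hz) (by simpa using hz2)
    -- near x, px = 0
    have hcont : Continuous (fun z => a * φ t z) :=
      continuous_const.mul (continuous_iff_continuousAt.2 (fun z => (hpx t z).continuousAt))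
    have hev : ∀ᶠ z in nhds x, 2 * d < a * φ t z := hcont.continuousAt.eventually (lt_mem_nhds h1)
    have hz0 : (fun z => a * px t z) =ᶠ[nhds x] fun _ => 0 := by
      filter_upwards [hev] with z hz
      exact le_antisymm (not_lt.1 (hneg z hz)) (not_lt.1 (hpos z hz))
    have hd1 : HasDerivAt (fun z => a * px t z) 0 x :=
      (hasDerivAt_const x (0:ℝ)).congr_of_eventuallyEq hz0
    have hd2 := hd1.unique ((hpxx t x).const_mul a)
    have hn := abs_le.1 (bn t x)
    rcases ha with rfl | rfl
    · have := add_one_le_exp (φ t x)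
      linarith [hn.1, hn.2]
    · have hle : φ t x ≤ -(2 * d) := by linarith
      have h3 := exp_le_exp.2 hle
      have h4 := add_one_le_exp (2 * d)
      have h5 : exp (2 * d) * exp (-(2 * d)) = 1 := by rw [← exp_add]; simp
      have h6 : (1 + 2 * d) * exp (-(2 * d)) ≤ 1 := by
        nlinarith [exp_pos (-(2 * d))]
      have h7 : exp (-(2 * d)) < 1 - d := by
        by_contra hcon
        push Not at hcon
        nlinarith
      linarith [hn.1, hn.2]
  intro t x
  rw [abs_le]
  constructor
  · have := key2 (-1) (Or.inr rfl) t x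
    by_contra hcon
    push Not at hcon
    exact this (by linarith)
  · have := key2 1 (Or.inl rfl) t x
    by_contra hcon
    push Not at hcon
    exact this (by linarith)



/-! ### L² theory of the potential -/

lemma phi_L2 {φ px n : ℝ → ℝ} (hpx : ∀ x, HasDerivAt φ (px x) x)
    (hpxx : ∀ x, HasDerivAt px (exp (φ x) - 1 - n x) x) (cn : Continuous n)
    (bφ : ∀ x, |φ x| ≤ 1/2) (bn : ∀ x, |n x| ≤ 1/2) (hn : Integrable (fun x => n x ^ 2)) :
    Integrable (fun x => φ x ^ 2 + px x ^ 2) := by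
  have cφ : Continuous φ := continuous_iff_continuousAt.2 (fun x => (hpx x).continuousAt)
  have cp : Continuous px := continuous_iff_continuousAt.2 (fun x => (hpxx x).continuousAt)
  have bpxx : ∀ x, |exp (φ x) - 1 - n x| ≤ 2 := by
    intro x
    have h1 := tool_exp_upper (bφ x) (b := 0) (by norm_num)
    have h2 := bφ x
    have h3 := bn x
    rw [exp_zero, sub_zero] at h1
    rw [abs_le] at h1 h3 ⊢
    constructor <;> linarith [h1.1, h1.2, h3.1, h3.2]
  have bpx : ∀ x, |px x| ≤ 3 := by
    intro x
    have l1 := tool_mono (c := px x - 2) (a := x) (b := x + 1) hpx (by linarith) (fun y h1 h2 => by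
      have := tool_mono (c := -2) hpxx h1.le (fun z _ _ => (abs_le.1 (bpxx z)).1)
      linarith)
    have l2 := tool_mono (g := fun x => - φ x) (g' := fun x => - px x)
      (c := -px x - 2) (a := x) (b := x + 1) (fun x => (hpx x).neg) (by linarith) (fun y h1 h2 => by
      have := tool_mono (g := fun x => - px x) (g' := fun x => -(exp (φ x) - 1 - n x))
        (c := -2) (fun x => (hpxx x).neg) h1.le (fun z _ _ => by
          linarith [(abs_le.1 (bpxx z)).2])
      linarith)
    have h1 := abs_le.1 (bφ x)
    have h2 := abs_le.1 (bφ (x + 1))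
    rw [abs_le]
    constructor <;> linarith [h1.1, h1.2, h2.1, h2.2]
  have hder : ∀ x, HasDerivAt (fun x => φ x * px x)
      (px x * px x + φ x * (exp (φ x) - 1 - n x)) x := fun x => (hpx x).mul (hpxx x)
  have hpt : ∀ x, (φ x ^ 2 + px x ^ 2) ≤
      4 * (px x * px x + φ x * (exp (φ x) - 1 - n x)) + 4 * n x ^ 2 := by
    intro x
    have h1 := tool_exp_lower (bφ x) (b := 0) (by norm_num)
    rw [exp_zero, sub_zero] at h1
    nlinarith [sq_nonneg (φ x / 2 - n x), sq_nonneg (px x)]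
  have hcd : Continuous (fun x => px x * px x + φ x * (exp (φ x) - 1 - n x)) := by fun_prop
  refine integrable_of_intervalIntegral_norm_bounded (ι := ℕ) (l := Filter.atTop)
    (a := fun i => -(i:ℝ)) (b := fun i => (i:ℝ))
    (12 + 4 * ∫ x, n x ^ 2) (fun i => ?_) ?_ ?_ ?_
  · exact Continuous.integrableOn_Ioc (by fun_prop)
  · exact Filter.tendsto_neg_atTop_atBot.comp tendsto_natCast_atTop_atTop
  · exact tendsto_natCast_atTop_atTop
  · refine Filter.Eventually.of_forall (fun i => ?_)
    have hle : -(i:ℝ) ≤ i := by have : (0:ℝ) ≤ i := by positivity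
                                linarith
    have s1 : (∫ x in (-(i:ℝ))..i, ‖φ x ^ 2 + px x ^ 2‖) ≤ ∫ x in (-(i:ℝ))..i,
        (4 * (px x * px x + φ x * (exp (φ x) - 1 - n x)) + 4 * n x ^ 2) := by
      refine intervalIntegral.integral_mono_on hle
        (Continuous.intervalIntegrable (by fun_prop) _ _)
        (Continuous.intervalIntegrable (by fun_prop) _ _) (fun x _ => ?_)
      rw [Real.norm_eq_abs, abs_of_nonneg (by positivity)]
      exact hpt x
    rw [intervalIntegral.integral_add (Continuous.intervalIntegrable (by fun_prop) _ _)
      (Continuous.intervalIntegrable (by fun_prop) _ _), intervalIntegral.integral_const_mul,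
      intervalIntegral.integral_const_mul, intervalIntegral.integral_eq_sub_of_hasDerivAt
        (fun x _ => hder x) (hcd.intervalIntegrable _ _)] at s1
    have s2 : (∫ x in (-(i:ℝ))..i, n x ^ 2) ≤ ∫ x, n x ^ 2 := by
      rw [intervalIntegral.integral_of_le hle]
      exact setIntegral_le_integral hn (Filter.Eventually.of_forall (fun x => by positivity))
    have s3 : ∀ x, |φ x * px x| ≤ 3/2 := by
      intro x
      rw [abs_mul]
      nlinarith [bφ x, bpx x, abs_nonneg (φ x), abs_nonneg (px x)]
    have h1 := abs_le.1 (s3 i)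
    have h2 := abs_le.1 (s3 (-i))
    linarith [h1.1, h1.2, h2.1, h2.2]

lemma phi_weighted {φ px n χ χ1 : ℝ → ℝ} (hpx : ∀ x, HasDerivAt φ (px x) x)
    (hpxx : ∀ x, HasDerivAt px (exp (φ x) - 1 - n x) x) (cn : Continuous n)
    (bφ : ∀ x, |φ x| ≤ 1/2) (hn : Integrable (fun x => n x ^ 2))
    (hφ : Integrable (fun x => φ x ^ 2 + px x ^ 2))
    (hχ : ∀ x, HasDerivAt χ (χ1 x) x) (cχ1 : Continuous χ1) (h0 : ∀ x, 0 ≤ χ x)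
    (h1 : ∀ x, χ x ≤ 1) (hb : ∀ x, |χ1 x| ≤ 1/2 * χ x) :
    (∫ x, χ x * (px x ^ 2 / 2 + φ x ^ 2 / 4)) ≤ 2 * ∫ x, χ x * n x ^ 2 := by
  have cφ : Continuous φ := continuous_iff_continuousAt.2 (fun x => (hpx x).continuousAt)
  have cp : Continuous px := continuous_iff_continuousAt.2 (fun x => (hpxx x).continuousAt)
  have cχ : Continuous χ := continuous_iff_continuousAt.2 (fun x => (hχ x).continuousAt)
  have hS : Integrable (fun x => n x ^ 2 + (φ x ^ 2 + px x ^ 2)) := hn.add hφ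
  have e1 : ∀ x, |exp (φ x) - 1| ≤ 2 * |φ x| := fun x => by
    have h1 := tool_exp_upper (bφ x) (b := 0) (by norm_num)
    rwa [exp_zero, sub_zero] at h1
  have hχa : ∀ x, |χ x| ≤ 1 := fun x => by rw [abs_of_nonneg (h0 x)]; exact h1 x
  have hchiB : ∀ x, |χ1 x| ≤ 1 := fun x => by linarith [hb x, h1 x]
  have hder : ∀ x, HasDerivAt (fun x => χ x * (φ x * px x))
      (χ1 x * (φ x * px x) + χ x * (px x * px x + φ x * (exp (φ x) - 1 - n x))) x :=
    fun x => (hχ x).mul ((hpx x).mul (hpxx x))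
  have habs : ∀ x, |φ x * px x| ≤ n x ^ 2 + (φ x ^ 2 + px x ^ 2) := by
    intro x
    rw [abs_mul]
    nlinarith [sq_nonneg (|φ x| - |px x|), sq_abs (φ x), sq_abs (px x), sq_nonneg (n x)]
  have i0 : Integrable (fun x => χ x * (φ x * px x)) := by
    refine tool_int_dom (by fun_prop) hS 1 (fun x => ?_)
    rw [abs_mul]
    exact mul_le_mul (hχa x) (habs x) (abs_nonneg _) zero_le_one
  have i1 : Integrable (fun x => χ1 x * (φ x * px x)
      + χ x * (px x * px x + φ x * (exp (φ x) - 1 - n x))) := by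
    refine tool_int_dom (by fun_prop) hS 5 (fun x => ?_)
    have a1 : |χ1 x * (φ x * px x)| ≤ 1 * (n x ^ 2 + (φ x ^ 2 + px x ^ 2)) := by
      rw [abs_mul]
      exact mul_le_mul (hchiB x) (habs x) (abs_nonneg _) zero_le_one
    have a2 : |(px x * px x + φ x * (exp (φ x) - 1 - n x))| ≤
        4 * (n x ^ 2 + (φ x ^ 2 + px x ^ 2)) := by
      have b1 : |φ x * (exp (φ x) - 1 - n x)| ≤ |φ x| * (2 * |φ x| + |n x|) := by
        rw [abs_mul]
        refine mul_le_mul_of_nonneg_left ?_ (abs_nonneg _)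
        exact (abs_sub _ _).trans (by linarith [e1 x])
      have b2 := abs_add_le (px x * px x) (φ x * (exp (φ x) - 1 - n x))
      rw [abs_mul_self (px x)] at b2
      nlinarith [sq_nonneg (|φ x| - |n x|), sq_abs (φ x), sq_abs (n x), sq_nonneg (px x)]
    have a3 : |χ x * (px x * px x + φ x * (exp (φ x) - 1 - n x))| ≤
        1 * (4 * (n x ^ 2 + (φ x ^ 2 + px x ^ 2))) := by
      rw [abs_mul]
      exact mul_le_mul (hχa x) a2 (abs_nonneg _) zero_le_one
    exact (abs_add_le _ _).trans (by linarith)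
  have z := tool_int_zero hder i1 i0
  have i2 : Integrable (fun x => χ x * n x ^ 2) := by
    refine tool_int_dom (by fun_prop) hn 1 (fun x => ?_)
    rw [abs_mul, abs_of_nonneg (sq_nonneg (n x))]
    exact mul_le_mul_of_nonneg_right (hχa x) (sq_nonneg _)
  have i3 : Integrable (fun x => χ x * (px x ^ 2 / 2 + φ x ^ 2 / 4)) := by
    refine tool_int_dom (by fun_prop) hφ 1 (fun x => ?_)
    rw [abs_mul, abs_of_nonneg (a := (px x ^ 2 / 2 + φ x ^ 2 / 4)) (by positivity)]
    refine mul_le_mul (hχa x) ?_ (by positivity) zero_le_one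
    nlinarith [sq_nonneg (px x), sq_nonneg (φ x)]
  have hmono : (∫ x, χ x * (px x ^ 2 / 2 + φ x ^ 2 / 4)) ≤ ∫ x, ((χ1 x * (φ x * px x)
      + χ x * (px x * px x + φ x * (exp (φ x) - 1 - n x))) + 2 * (χ x * n x ^ 2)) := by
    refine integral_mono i3 (i1.add (i2.const_mul 2)) (fun x => ?_)
    have h2 := tool_exp_lower (bφ x) (b := 0) (by norm_num)
    rw [exp_zero, sub_zero] at h2
    have h3 : -(1/2 * χ x * (φ x ^ 2 / 4 + px x ^ 2)) ≤ χ1 x * (φ x * px x) := by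
      have q1 : |χ1 x * (φ x * px x)| ≤ 1/2 * χ x * (φ x ^ 2 / 4 + px x ^ 2) := by
        rw [abs_mul]
        refine mul_le_mul (hb x) ?_ (abs_nonneg _) (by linarith [h0 x])
        rw [abs_mul]
        nlinarith [sq_nonneg (|φ x| / 2 - |px x|), sq_abs (φ x), sq_abs (px x)]
      linarith [(abs_le.1 q1).1]
    have h4 : (px x ^ 2 + 3 / 8 * φ x ^ 2) ≤
       (px x * px x + φ x * (exp (φ x) - 1 - n x)) + 2 * n x ^ 2 := by
      nlinarith [sq_nonneg (φ x / 4 - n x)]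
    have h5 := mul_le_mul_of_nonneg_left h4 (h0 x)
    simp only
    nlinarith
  rw [integral_add i1 (i2.const_mul 2), z, integral_const_mul] at hmono
  linarith



/-! ### The quantitative solution package -/

def Rex (x : ℝ) : ℝ := x * exp x - exp x + 1

lemma Rex_convex (a b : ℝ) : Rex a - Rex b ≤ a * (exp a - exp b) := by
  unfold Rex
  have := add_one_le_exp (a - b)
  have h2 : exp a = exp b * exp (a - b) := by rw [← exp_add]; ring_nf
  nlinarith [exp_pos b]

lemma Rex_nonneg (a : ℝ) : 0 ≤ Rex a := by
  have := Rex_convex 0 a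
  simp [Rex] at this ⊢
  linarith

lemma Rex_le {a : ℝ} (ha : |a| ≤ 1/2) : Rex a ≤ 2 * a ^ 2 := by
  have h := Rex_convex a 0
  have h1 := tool_exp_upper ha (b := 0) (by norm_num)
  rw [exp_zero, sub_zero] at h1
  have h0 : Rex 0 = 0 := by simp [Rex]
  rw [h0, sub_zero, exp_zero] at h
  refine h.trans ((le_abs_self _).trans ?_)
  rw [abs_mul]
  nlinarith [abs_nonneg a, sq_abs a]

structure Pack (w wd W : ℝ → ℝ) (n u φ nt nx ut ux px : ℝ → ℝ → ℝ) (M : ℝ) : Prop where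
  M1 : 1 ≤ M
  cn : Continuous (Function.uncurry n)
  cu : Continuous (Function.uncurry u)
  cnt : Continuous (Function.uncurry nt)
  cnx : Continuous (Function.uncurry nx)
  cut : Continuous (Function.uncurry ut)
  cux : Continuous (Function.uncurry ux)
  cpx : Continuous (Function.uncurry px)
  hnt : ∀ t x, HasDerivAt (fun s => n s x) (nt t x) t
  hnx : ∀ t x, HasDerivAt (n t) (nx t x) x
  hut : ∀ t x, HasDerivAt (fun s => u s x) (ut t x) t
  hux : ∀ t x, HasDerivAt (u t) (ux t x) x
  hpx : ∀ t x, HasDerivAt (φ t) (px t x) x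
  hpxx : ∀ t x, HasDerivAt (px t) (exp (φ t x) - 1 - n t x) x
  eqn : ∀ t x, nt t x = -(nx t x * u t x + (1 + n t x) * ux t x)
  equ : ∀ t x, ut t x = -(u t x * ux t x + wd (n t x) * nx t x + px t x)
  bn : ∀ t x, |n t x| ≤ 1/2
  bu : ∀ t x, |u t x| ≤ 1/2
  bφ : ∀ t x, |φ t x| ≤ 1/2
  hw : ∀ a, |a| ≤ 1/2 → HasDerivAt w (wd a) a
  hW : ∀ a, |a| ≤ 1/2 → HasDerivAt W (w a) a
  bw : ∀ a, |a| ≤ 1/2 → |w a| ≤ M * |a|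
  bW0 : ∀ a, |a| ≤ 1/2 → 0 ≤ W a
  bW : ∀ a, |a| ≤ 1/2 → W a ≤ M * a ^ 2
  bwd : ∀ a, |a| ≤ 1/2 → |wd a| ≤ M
  hS : ∀ t, Integrable (fun x => n t x ^ 2 + u t x ^ 2 + nx t x ^ 2 + ux t x ^ 2 + φ t x ^ 2
    + px t x ^ 2)
  bS : ∀ t, (∫ x, (n t x ^ 2 + u t x ^ 2 + nx t x ^ 2 + ux t x ^ 2 + φ t x ^ 2
    + px t x ^ 2)) ≤ M

/-- weight functions -/
structure Weight (χ χ1 χ2 : ℝ → ℝ) (η : ℝ) : Prop where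
  h1 : ∀ x, HasDerivAt χ (χ1 x) x
  h2 : ∀ x, HasDerivAt χ1 (χ2 x) x
  c2 : Continuous χ2
  p0 : ∀ x, 0 ≤ χ x
  p1 : ∀ x, χ x ≤ 1
  q0 : ∀ x, 0 ≤ χ1 x
  q1 : ∀ x, χ1 x ≤ 1
  r : ∀ x, |χ2 x| ≤ η * χ1 x

lemma tool_fubini' {f S : ℝ → ℝ → ℝ} {G : ℝ → ℝ} (hc : Continuous (Function.uncurry f)) {s t : ℝ}
    (hst : s ≤ t) (C M : ℝ) (hC : 0 ≤ C) (hS : ∀ τ, Integrable (S τ)) (hM : ∀ τ, ∫ x, S τ x ≤ M)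
    (hG : Integrable G) (hb : ∀ τ x, |f τ x| ≤ C * (S τ x + G x)) :
    Integrable (fun x => ∫ τ in s..t, f τ x) ∧
    (∫ x, ∫ τ in s..t, f τ x) = (∫ τ in s..t, ∫ x, f τ x) ∧
    IntervalIntegrable (fun τ => ∫ x, f τ x) volume s t ∧
    (∀ τ, Integrable (f τ)) := by
  have hi : ∀ τ, Integrable (f τ) := fun τ => tool_int_dom
      (hc.comp (by fun_prop : Continuous (fun x : ℝ => (τ, x)))) ((hS τ).add hG) C (hb τ)
  obtain ⟨a, b, c⟩ := tool_fubini hc hst (C * (M + ∫ x, G x)) hi (fun τ => by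
    have h1 : ∫ x, |f τ x| ≤ ∫ x, C * (S τ x + G x) :=
      integral_mono (hi τ).abs (((hS τ).add hG).const_mul C) (hb τ)
    rw [integral_const_mul, integral_add (hS τ) hG] at h1
    exact h1.trans (mul_le_mul_of_nonneg_left (by linarith [hM τ]) hC))
  exact ⟨a, b, c, hi⟩

lemma tool_cs {f : ℝ → ℝ} (hf : Continuous f) {s t : ℝ} (hst : s < t) :
    (∫ τ in s..t, f τ) ^ 2 ≤ (t - s) * ∫ τ in s..t, f τ ^ 2 := by
  set I := ∫ τ in s..t, f τ with hI
  have hp : 0 < t - s := by linarith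
  have h0 : 0 ≤ ∫ τ in s..t, (f τ - I / (t - s)) ^ 2 :=
    intervalIntegral.integral_nonneg hst.le (fun τ _ => sq_nonneg _)
  have e : ∫ τ in s..t, (f τ - I / (t - s)) ^ 2 =
      (∫ τ in s..t, f τ ^ 2) - 2 * (I / (t - s)) * I + (t - s) * (I / (t - s)) ^ 2 := by
    have e1 : (fun τ => (f τ - I / (t - s)) ^ 2) =
        fun τ => (f τ ^ 2 - 2 * (I / (t - s)) * f τ) + (I / (t - s)) ^ 2 := by
      funext τ; ring
    rw [e1, intervalIntegral.integral_add (Continuous.intervalIntegrable (by fun_prop) _ _)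
      (Continuous.intervalIntegrable (by fun_prop) _ _),
      intervalIntegral.integral_sub (Continuous.intervalIntegrable (by fun_prop) _ _)
      (Continuous.intervalIntegrable (by fun_prop) _ _), intervalIntegral.integral_const_mul,
      intervalIntegral.integral_const, smul_eq_mul]
  rw [e] at h0
  have e2 : (∫ τ in s..t, f τ ^ 2) - 2 * (I / (t - s)) * I + (t - s) * (I / (t - s)) ^ 2
    = ((t - s) * (∫ τ in s..t, f τ ^ 2) - I ^ 2) / (t - s) := by field_simp; ring
  rw [e2] at h0
  have := mul_nonneg h0 hp.le
  rw [div_mul_cancel₀ _ hp.ne'] at this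
  linarith

namespace Pack

variable {w wd W : ℝ → ℝ} {n u φ nt nx ut ux px : ℝ → ℝ → ℝ} {M : ℝ}

/-- the dominating density -/
def SS (n u φ nx ux px : ℝ → ℝ → ℝ) (t x : ℝ) : ℝ :=
  n t x ^ 2 + u t x ^ 2 + nx t x ^ 2 + ux t x ^ 2 + φ t x ^ 2 + px t x ^ 2

lemma cslice {f : ℝ → ℝ → ℝ} (h : Continuous (Function.uncurry f)) (t : ℝ) : Continuous (f t) :=
  h.comp (by fun_prop : Continuous (fun x : ℝ => (t, x)))

lemma ctime {f : ℝ → ℝ → ℝ} (h : Continuous (Function.uncurry f)) (x : ℝ) :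
    Continuous (fun t => f t x) :=
  h.comp (by fun_prop : Continuous (fun t : ℝ => (t, x)))

/-- mass current -/
def J (n u : ℝ → ℝ → ℝ) (t x : ℝ) : ℝ := (1 + n t x) * u t x

def Kf (n u : ℝ → ℝ → ℝ) (s t : ℝ) (x : ℝ) : ℝ := ∫ τ in s..t, J n u τ x

lemma cJ (hP : Pack w wd W n u φ nt nx ut ux px M) : Continuous (Function.uncurry (J n u)) := by
  have h1 := hP.cn
  have h2 := hP.cu
  exact (continuous_const.add h1).mul h2

lemma J_sq (hP : Pack w wd W n u φ nt nx ut ux px M) (t x : ℝ) :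
    J n u t x ^ 2 ≤ 3 * u t x ^ 2 := by
  have := abs_le.1 (hP.bn t x)
  unfold J
  rw [mul_pow]
  have h : (1 + n t x) ^ 2 ≤ 3 := by nlinarith [this.1, this.2]
  exact mul_le_mul_of_nonneg_right h (sq_nonneg _)

lemma J_sq' (hP : Pack w wd W n u φ nt nx ut ux px M) (t x : ℝ) :
    J n u t x ^ 2 ≤ 3 * SS n u φ nx ux px t x := by
  have := hP.J_sq t x
  unfold SS
  nlinarith [sq_nonneg (n t x), sq_nonneg (nx t x), sq_nonneg (ux t x), sq_nonneg (φ t x),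
    sq_nonneg (px t x)]

lemma hSS (hP : Pack w wd W n u φ nt nx ut ux px M) (t : ℝ) : Integrable (SS n u φ nx ux px t) :=
  hP.hS t

lemma bSS (hP : Pack w wd W n u φ nt nx ut ux px M) (t : ℝ) : ∫ x, SS n u φ nx ux px t x ≤ M :=
  hP.bS t

lemma SS_nonneg (n u φ nx ux px : ℝ → ℝ → ℝ) (t x : ℝ) : 0 ≤ SS n u φ nx ux px t x := by
  unfold SS; positivity

lemma Kderiv (hP : Pack w wd W n u φ nt nx ut ux px M) (s t x : ℝ) :
    HasDerivAt (Kf n u s t) (-(n t x - n s x)) x := by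
  have cn := hP.cn
  have cnt := hP.cnt
  have hJx : ∀ τ z, HasDerivAt (J n u τ) (-nt τ z) z := by
    intro τ z
    have := ((hP.hnx τ z).const_add 1).mul (hP.hux τ z)
    exact this.congr_deriv (by rw [hP.eqn]; ring)
  have e1 : ∀ z, Kf n u s t z = Kf n u s t 0 + ∫ y in (0:ℝ)..z, -(n t y - n s y) := by
    intro z
    have a1 : (∫ y in (0:ℝ)..z, ∫ τ in s..t, -nt τ y) = ∫ y in (0:ℝ)..z, -(n t y - n s y) := by
      refine intervalIntegral.integral_congr (fun y _ => ?_)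
      have := intervalIntegral.integral_eq_sub_of_hasDerivAt (a := s) (b := t)
        (fun τ _ => hP.hnt τ y) ((ctime cnt y).intervalIntegrable _ _)
      simp only [intervalIntegral.integral_neg]
      rw [this]
    have a2 : (∫ τ in s..t, ∫ y in (0:ℝ)..z, -nt τ y) = ∫ τ in s..t, (J n u τ z - J n u τ 0) := by
      refine intervalIntegral.integral_congr (fun τ _ => ?_)
      exact intervalIntegral.integral_eq_sub_of_hasDerivAt (fun y _ => hJx τ y)
        ((cslice cnt τ).neg.intervalIntegrable _ _)
    have a3 := tool_swap (f := fun τ y => -nt τ y) (by exact cnt.neg) s t 0 z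
    rw [intervalIntegral.integral_sub ((ctime hP.cJ z).intervalIntegrable _ _)
      ((ctime hP.cJ 0).intervalIntegrable _ _)] at a2
    have : Kf n u s t z - Kf n u s t 0 = ∫ y in (0:ℝ)..z, -(n t y - n s y) := by
      rw [← a1, a3, a2]; rfl
    linarith
  have hc : Continuous (fun y => -(n t y - n s y)) := ((cslice cn t).sub (cslice cn s)).neg
  have e2 : Kf n u s t = fun z => Kf n u s t 0 + ∫ y in (0:ℝ)..z, -(n t y - n s y) := funext e1
  rw [e2]
  exact (hc.integral_hasStrictDerivAt 0 x).hasDerivAt.const_add _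

lemma cK (hP : Pack w wd W n u φ nt nx ut ux px M) (s t : ℝ) : Continuous (Kf n u s t) :=
  continuous_iff_continuousAt.2 (fun x => (hP.Kderiv s t x).continuousAt)

lemma Ksq (hP : Pack w wd W n u φ nt nx ut ux px M) {s t : ℝ} (hst : s < t) {χ : ℝ → ℝ}
    (cχ : Continuous χ) (h0 : ∀ x, 0 ≤ χ x) (h1 : ∀ x, χ x ≤ 1) :
    Integrable (fun x => χ x * Kf n u s t x ^ 2) ∧
    (∫ x, χ x * Kf n u s t x ^ 2) ≤ (t - s) * ∫ τ in s..t, ∫ x, χ x * J n u τ x ^ 2 := by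
  have cJ := hP.cJ
  have hc : Continuous (Function.uncurry (fun τ x => χ x * J n u τ x ^ 2)) :=
    (cχ.comp continuous_snd).mul (cJ.pow 2)
  obtain ⟨a, b, -, -⟩ := tool_fubini' (G := fun _ => 0) hc hst.le 3 M (by norm_num) hP.hSS hP.bSS
    (integrable_zero _ _ _) (fun τ x => by
      rw [abs_of_nonneg (mul_nonneg (h0 x) (sq_nonneg _))]
      have := hP.J_sq' τ x
      nlinarith [h0 x, h1 x, sq_nonneg (J n u τ x)])
  have hpt : ∀ x, χ x * Kf n u s t x ^ 2 ≤ (t - s) * ∫ τ in s..t, χ x * J n u τ x ^ 2 := by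
    intro x
    have := tool_cs (ctime cJ x) hst
    rw [intervalIntegral.integral_const_mul]
    calc χ x * Kf n u s t x ^ 2 ≤ χ x * ((t - s) * ∫ τ in s..t, J n u τ x ^ 2) :=
          mul_le_mul_of_nonneg_left this (h0 x)
      _ = _ := by ring
  have cK := hP.cK s t
  have i1 : Integrable (fun x => χ x * Kf n u s t x ^ 2) := by
    refine tool_int_dom (by fun_prop) a (t - s) (fun x => ?_)
    rw [abs_of_nonneg (mul_nonneg (h0 x) (sq_nonneg _))]
    exact hpt x
  refine ⟨i1, ?_⟩
  rw [← b, ← integral_const_mul]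
  exact integral_mono i1 (a.const_mul _) hpt

lemma Ksq1 (hP : Pack w wd W n u φ nt nx ut ux px M) {s t : ℝ} (hst : s < t) :
    Integrable (fun x => Kf n u s t x ^ 2) ∧
    (∫ x, Kf n u s t x ^ 2) ≤ 3 * M * (t - s) ^ 2 := by
  obtain ⟨a, b⟩ := hP.Ksq hst (χ := fun _ => 1) continuous_const (by simp) (by simp)
  simp only [one_mul] at a b
  refine ⟨a, b.trans ?_⟩
  have cJ := hP.cJ
  obtain ⟨-, -, c, d⟩ := tool_fubini' (f := fun τ x => J n u τ x ^ 2) (G := fun _ => 0)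
    (by exact cJ.pow 2) hst.le 3 M (by norm_num) hP.hSS hP.bSS
    (integrable_zero _ _ _) (fun τ x => by
      rw [abs_of_nonneg (sq_nonneg _)]
      simpa using hP.J_sq' τ x)
  have e : ∀ τ, ∫ x, J n u τ x ^ 2 ≤ 3 * M := by
    intro τ
    have := integral_mono (d τ) ((hP.hSS τ).const_mul 3) (hP.J_sq' τ)
    rw [integral_const_mul] at this
    linarith [hP.bSS τ]
  have e2 : (∫ τ in s..t, ∫ x, J n u τ x ^ 2) ≤ ∫ τ in s..t, 3 * M :=
    intervalIntegral.integral_mono_on hst.le c (by simp) (fun τ _ => e τ)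
  rw [intervalIntegral.integral_const, smul_eq_mul] at e2
  have := mul_le_mul_of_nonneg_left e2 (by linarith : 0 ≤ t - s)
  linarith

end Pack



namespace Pack

variable {w wd W : ℝ → ℝ} {n u φ nt nx ut ux px : ℝ → ℝ → ℝ} {M : ℝ}

/-- dominating function for differences -/
def GG (n u φ nx ux px : ℝ → ℝ → ℝ) (s t x : ℝ) : ℝ :=
  SS n u φ nx ux px t x + SS n u φ nx ux px s x + Kf n u s t x ^ 2

def Zf (n u px : ℝ → ℝ → ℝ) (s t x : ℝ) : ℝ := px t x - px s x - Kf n u s t x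

lemma cφ (hP : Pack w wd W n u φ nt nx ut ux px M) (t : ℝ) : Continuous (φ t) :=
  continuous_iff_continuousAt.2 (fun x => (hP.hpx t x).continuousAt)

lemma hGG (hP : Pack w wd W n u φ nt nx ut ux px M) {s t : ℝ} (hst : s < t) :
    Integrable (GG n u φ nx ux px s t) :=
  ((hP.hSS t).add (hP.hSS s)).add (hP.Ksq1 hst).1

lemma SS_ge (n u φ nx ux px : ℝ → ℝ → ℝ) (t x : ℝ) :
    φ t x ^ 2 + px t x ^ 2 + n t x ^ 2 + u t x ^ 2 ≤ SS n u φ nx ux px t x := by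
  unfold SS; nlinarith [sq_nonneg (nx t x), sq_nonneg (ux t x)]

lemma GG_D (n u φ nx ux px : ℝ → ℝ → ℝ) (s t x : ℝ) :
    (φ t x - φ s x) ^ 2 ≤ 2 * GG n u φ nx ux px s t x := by
  have h1 := SS_ge n u φ nx ux px t x
  have h2 := SS_ge n u φ nx ux px s x
  unfold GG
  nlinarith [sq_nonneg (φ t x + φ s x), sq_nonneg (px t x), sq_nonneg (px s x),
    sq_nonneg (n t x), sq_nonneg (u t x), sq_nonneg (n s x), sq_nonneg (u s x),
    sq_nonneg (Kf n u s t x)]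

lemma GG_D1 (n u φ nx ux px : ℝ → ℝ → ℝ) (s t x : ℝ) :
    (px t x - px s x) ^ 2 ≤ 2 * GG n u φ nx ux px s t x := by
  have h1 := SS_ge n u φ nx ux px t x
  have h2 := SS_ge n u φ nx ux px s x
  unfold GG
  nlinarith [sq_nonneg (px t x + px s x), sq_nonneg (φ t x), sq_nonneg (φ s x),
    sq_nonneg (n t x), sq_nonneg (u t x), sq_nonneg (n s x), sq_nonneg (u s x),
    sq_nonneg (Kf n u s t x)]

lemma GG_K (n u φ nx ux px : ℝ → ℝ → ℝ) (s t x : ℝ) :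
    Kf n u s t x ^ 2 ≤ GG n u φ nx ux px s t x := by
  unfold GG
  linarith [SS_nonneg n u φ nx ux px t x, SS_nonneg n u φ nx ux px s x]

lemma GG_Z (n u φ nx ux px : ℝ → ℝ → ℝ) (s t x : ℝ) :
    Zf n u px s t x ^ 2 ≤ 6 * GG n u φ nx ux px s t x := by
  have h1 := GG_D1 n u φ nx ux px s t x
  have h2 := GG_K n u φ nx ux px s t x
  unfold Zf
  nlinarith [sq_nonneg (px t x - px s x + Kf n u s t x)]

lemma GG_t (n u φ nx ux px : ℝ → ℝ → ℝ) (s t x : ℝ) :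
    φ t x ^ 2 + px t x ^ 2 ≤ GG n u φ nx ux px s t x := by
  have h1 := SS_ge n u φ nx ux px t x
  unfold GG
  nlinarith [SS_nonneg n u φ nx ux px s x, sq_nonneg (n t x), sq_nonneg (u t x),
    sq_nonneg (Kf n u s t x)]

lemma cZ (hP : Pack w wd W n u φ nt nx ut ux px M) (s t : ℝ) : Continuous (Zf n u px s t) :=
  ((cslice hP.cpx t).sub (cslice hP.cpx s)).sub (hP.cK s t)

lemma Zderiv (hP : Pack w wd W n u φ nt nx ut ux px M) (s t x : ℝ) :
    HasDerivAt (Zf n u px s t) (exp (φ t x) - exp (φ s x)) x :=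
  (((hP.hpxx t x).sub (hP.hpxx s x)).sub (hP.Kderiv s t x)).congr_deriv (by ring)

lemma qd_low (hP : Pack w wd W n u φ nt nx ut ux px M) (s t x : ℝ) :
    (φ t x - φ s x) ^ 2 / 2 ≤ (φ t x - φ s x) * (exp (φ t x) - exp (φ s x)) :=
  tool_exp_lower (hP.bφ t x) (hP.bφ s x)

lemma qd_sq (hP : Pack w wd W n u φ nt nx ut ux px M) (s t x : ℝ) :
    (exp (φ t x) - exp (φ s x)) ^ 2 ≤ 8 * GG n u φ nx ux px s t x := by
  have h := tool_exp_upper (hP.bφ t x) (hP.bφ s x)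
  have h1 := GG_D n u φ nx ux px s t x
  have h2 := abs_le_abs_of_nonneg (abs_nonneg _) h
  have h3 : (exp (φ t x) - exp (φ s x)) ^ 2 ≤ (2 * (φ t x - φ s x)) ^ 2 := by
    apply sq_le_sq.2
    rw [abs_mul, abs_two]; exact h
  nlinarith

lemma abs_mul_le' (a b : ℝ) : |a * b| ≤ (a ^ 2 + b ^ 2) / 2 := by
  rw [abs_mul]
  nlinarith [sq_nonneg (|a| - |b|), sq_abs a, sq_abs b]

lemma dif1 (hP : Pack w wd W n u φ nt nx ut ux px M) {s t : ℝ} (hst : s < t) :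
    Integrable (fun x => (px t x - px s x) ^ 2) ∧
    (∫ x, (px t x - px s x) ^ 2) ≤ 3 * M * (t - s) ^ 2 := by
  have cpt := cslice hP.cpx t
  have cps := cslice hP.cpx s
  have cφt := hP.cφ t
  have cφs := hP.cφ s
  have cZ := hP.cZ s t
  have cK := hP.cK s t
  have i1 : Integrable (fun x => (px t x - px s x) ^ 2) :=
    tool_int_dom (by fun_prop) (hP.hGG hst) 2 (fun x => by
      rw [abs_of_nonneg (sq_nonneg _)]; exact GG_D1 n u φ nx ux px s t x)
  obtain ⟨i2, b2⟩ := hP.Ksq1 hst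
  have i3 : Integrable (fun x => (φ t x - φ s x) * Zf n u px s t x) :=
    tool_int_dom (by fun_prop) (hP.hGG hst) 10 (fun x => by
      have := abs_mul_le' (φ t x - φ s x) (Zf n u px s t x)
      have h1 := GG_D n u φ nx ux px s t x
      have h2 := GG_Z n u φ nx ux px s t x
      linarith [GG_K n u φ nx ux px s t x, sq_nonneg (Kf n u s t x)])
  have i4 : Integrable (fun x => (px t x - px s x) * Zf n u px s t x +
      (φ t x - φ s x) * (exp (φ t x) - exp (φ s x))) :=
    tool_int_dom (by fun_prop) (hP.hGG hst) 20 (fun x => by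
      have h0 := abs_mul_le' (px t x - px s x) (Zf n u px s t x)
      have h0' := abs_mul_le' (φ t x - φ s x) (exp (φ t x) - exp (φ s x))
      have h1 := GG_D n u φ nx ux px s t x
      have h2 := GG_Z n u φ nx ux px s t x
      have h3 := GG_D1 n u φ nx ux px s t x
      have h4 := hP.qd_sq s t x
      refine (abs_add_le _ _).trans ?_
      linarith [GG_K n u φ nx ux px s t x, sq_nonneg (Kf n u s t x)])
  have z : (∫ x, ((px t x - px s x) * Zf n u px s t x +
      (φ t x - φ s x) * (exp (φ t x) - exp (φ s x)))) = 0 :=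
    tool_int_zero (fun x => ((hP.hpx t x).sub (hP.hpx s x)).mul (hP.Zderiv s t x)) i4 i3
  have m : (∫ x, ((1/2) * (px t x - px s x) ^ 2 - (1/2) * Kf n u s t x ^ 2)) ≤ 0 := by
    rw [← z]
    refine integral_mono ((i1.const_mul _).sub (i2.const_mul _)) i4 (fun x => ?_)
    have := hP.qd_low s t x
    simp only [Zf]
    nlinarith [sq_nonneg (φ t x - φ s x), sq_nonneg (px t x - px s x - Kf n u s t x)]
  rw [integral_sub (i1.const_mul _) (i2.const_mul _), integral_const_mul, integral_const_mul] at m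
  exact ⟨i1, by linarith⟩

lemma dif2 (hP : Pack w wd W n u φ nt nx ut ux px M) {χ χ1 χ2 : ℝ → ℝ} {η : ℝ} (h0 : 0 ≤ η)
    (hη : η < 1)
    (hχ : Weight χ χ1 χ2 η) {s t : ℝ} (hst : s < t) :
    Integrable (fun x => χ1 x * Zf n u px s t x ^ 2) ∧
    (1 - η) * (∫ x, χ1 x * Zf n u px s t x ^ 2) ≤
      (t - s) * ∫ τ in s..t, ∫ x, χ1 x * J n u τ x ^ 2 := by
  have cpt := cslice hP.cpx t
  have cps := cslice hP.cpx s
  have cφt := hP.cφ t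
  have cφs := hP.cφ s
  have cZ := hP.cZ s t
  have cK := hP.cK s t
  have c1 : Continuous χ1 := continuous_iff_continuousAt.2 (fun x => (hχ.h2 x).continuousAt)
  have c2 := hχ.c2
  have gnn : ∀ x, 0 ≤ GG n u φ nx ux px s t x := fun x =>
    (sq_nonneg _).trans (GG_K n u φ nx ux px s t x)
  have i1 : Integrable (fun x => χ1 x * Zf n u px s t x ^ 2) :=
    tool_int_dom (by fun_prop) (hP.hGG hst) 6 (fun x => by
      rw [abs_of_nonneg (mul_nonneg (hχ.q0 x) (sq_nonneg _))]
      nlinarith [GG_Z n u φ nx ux px s t x, hχ.q0 x, hχ.q1 x, sq_nonneg (Zf n u px s t x)])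
  obtain ⟨i2, b2⟩ := hP.Ksq hst c1 hχ.q0 hχ.q1
  have bd : ∀ x a b, |b| ≤ 1 → |a| ≤ 10 * GG n u φ nx ux px s t x →
      |b * a| ≤ 10 * GG n u φ nx ux px s t x := by
    intro x a b hb ha
    rw [abs_mul]
    calc |b| * |a| ≤ 1 * |a| := mul_le_mul_of_nonneg_right hb (abs_nonneg _)
      _ ≤ _ := by linarith
  have b1 : ∀ x, |χ1 x| ≤ 1 := fun x => by rw [abs_of_nonneg (hχ.q0 x)]; exact hχ.q1 x
  have b2' : ∀ x, |χ2 x| ≤ 1 := fun x => (hχ.r x).trans (by nlinarith [hχ.q0 x, hχ.q1 x])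
  have eDZ : ∀ x, |(φ t x - φ s x) * Zf n u px s t x| ≤ 10 * GG n u φ nx ux px s t x := by
    intro x
    have := abs_mul_le' (φ t x - φ s x) (Zf n u px s t x)
    linarith [GG_D n u φ nx ux px s t x, GG_Z n u φ nx ux px s t x, gnn x]
  have eD1Z : ∀ x, |(px t x - px s x) * Zf n u px s t x| ≤ 10 * GG n u φ nx ux px s t x := by
    intro x
    have := abs_mul_le' (px t x - px s x) (Zf n u px s t x)
    linarith [GG_D1 n u φ nx ux px s t x, GG_Z n u φ nx ux px s t x, gnn x]
  have eDq : ∀ x, |(φ t x - φ s x) * (exp (φ t x) - exp (φ s x))|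
      ≤ 10 * GG n u φ nx ux px s t x := by
    intro x
    have := abs_mul_le' (φ t x - φ s x) (exp (φ t x) - exp (φ s x))
    linarith [GG_D n u φ nx ux px s t x, hP.qd_sq s t x, gnn x]
  have i3 : Integrable (fun x => χ1 x * ((φ t x - φ s x) * Zf n u px s t x)) :=
    tool_int_dom (by fun_prop) (hP.hGG hst) 10 (fun x => bd x _ _ (b1 x) (eDZ x))
  have i4a : Integrable (fun x => χ2 x * ((φ t x - φ s x) * Zf n u px s t x)) :=
    tool_int_dom (by fun_prop) (hP.hGG hst) 10 (fun x => bd x _ _ (b2' x) (eDZ x))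
  have i4b : Integrable (fun x => χ1 x * ((px t x - px s x) * Zf n u px s t x)) :=
    tool_int_dom (by fun_prop) (hP.hGG hst) 10 (fun x => bd x _ _ (b1 x) (eD1Z x))
  have i4c : Integrable (fun x => χ1 x * ((φ t x - φ s x) * (exp (φ t x) - exp (φ s x)))) :=
    tool_int_dom (by fun_prop) (hP.hGG hst) 10 (fun x => bd x _ _ (b1 x) (eDq x))
  have z : (∫ x, (χ2 x * ((φ t x - φ s x) * Zf n u px s t x) +
      (χ1 x * ((px t x - px s x) * Zf n u px s t x) +
      χ1 x * ((φ t x - φ s x) * (exp (φ t x) - exp (φ s x)))))) = 0 :=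
    tool_int_zero (fun x => ((hχ.h2 x).mul
      (((hP.hpx t x).sub (hP.hpx s x)).mul (hP.Zderiv s t x))).congr_deriv
        (by simp only [Pi.sub_apply, Pi.mul_apply]; ring)) (i4a.add (i4b.add i4c)) i3
  have m : (∫ x, ((1-η)/2 * (χ1 x * Zf n u px s t x ^ 2) - (1/2) * (χ1 x * Kf n u s t x ^ 2)))
      ≤ 0 := by
    rw [← z]
    refine integral_mono ((i1.const_mul _).sub (i2.const_mul _)) (i4a.add (i4b.add i4c))
      (fun x => ?_)
    have hq := mul_le_mul_of_nonneg_left (hP.qd_low s t x) (hχ.q0 x)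
    have e1 : px t x - px s x = Zf n u px s t x + Kf n u s t x := by unfold Zf; ring
    simp only [e1]
    have hr : -(χ2 x * ((φ t x - φ s x) * Zf n u px s t x)) ≤
        η * χ1 x * (((φ t x - φ s x) ^ 2 + Zf n u px s t x ^ 2) / 2) := by
      refine (neg_le_abs _).trans ?_
      rw [abs_mul]
      exact mul_le_mul (hχ.r x) (abs_mul_le' _ _) (abs_nonneg _) (mul_nonneg h0 (hχ.q0 x))
    have e3 : 0 ≤ χ1 x * (Zf n u px s t x + Kf n u s t x) ^ 2 :=
      mul_nonneg (hχ.q0 x) (sq_nonneg _)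
    have e4 : 0 ≤ (1 - η) * (χ1 x * (φ t x - φ s x) ^ 2) :=
      mul_nonneg (by linarith) (mul_nonneg (hχ.q0 x) (sq_nonneg _))
    nlinarith
  rw [integral_sub (i1.const_mul _) (i2.const_mul _), integral_const_mul, integral_const_mul] at m
  exact ⟨i1, by linarith⟩

/-- potential energy density -/
def PE (φ px : ℝ → ℝ → ℝ) (t x : ℝ) : ℝ := (1/2) * px t x ^ 2 + Rex (φ t x)

lemma cPE (hP : Pack w wd W n u φ nt nx ut ux px M) (t : ℝ) : Continuous (PE φ px t) := by
  have h1 := cslice hP.cpx t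
  have h2 := hP.cφ t
  unfold PE Rex
  fun_prop

lemma PE_nonneg (φ px : ℝ → ℝ → ℝ) (t x : ℝ) : 0 ≤ PE φ px t x := by
  unfold PE
  have := Rex_nonneg (φ t x)
  positivity

lemma PE_le (hP : Pack w wd W n u φ nt nx ut ux px M) (t x : ℝ) :
    PE φ px t x ≤ 2 * SS n u φ nx ux px t x := by
  have h1 := SS_ge n u φ nx ux px t x
  have h2 := Rex_le (hP.bφ t x)
  unfold PE
  nlinarith [sq_nonneg (px t x), sq_nonneg (n t x), sq_nonneg (u t x)]

lemma dif3 (hP : Pack w wd W n u φ nt nx ut ux px M) {χ χ1 χ2 : ℝ → ℝ} {η : ℝ} (h0 : 0 ≤ η)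
    (hη : η < 1)
    (hχ : Weight χ χ1 χ2 η) {s t a : ℝ} (hst : s < t) (ha : 0 < a) :
    (∫ x, χ x * (PE φ px t x - PE φ px s x)) ≤ (∫ x, χ x * (px t x * Kf n u s t x)) +
      a / 2 * (∫ x, χ1 x * φ t x ^ 2) + 1 / (2 * a) * ∫ x, χ1 x * Zf n u px s t x ^ 2 := by
  have cpt := cslice hP.cpx t
  have cps := cslice hP.cpx s
  have cφt := hP.cφ t
  have cφs := hP.cφ s
  have cZ := hP.cZ s t
  have cK := hP.cK s t
  have cPt := hP.cPE t
  have cPs := hP.cPE s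
  have c0 : Continuous χ := continuous_iff_continuousAt.2 (fun x => (hχ.h1 x).continuousAt)
  have c1 : Continuous χ1 := continuous_iff_continuousAt.2 (fun x => (hχ.h2 x).continuousAt)
  have gnn : ∀ x, 0 ≤ GG n u φ nx ux px s t x := fun x =>
    (sq_nonneg _).trans (GG_K n u φ nx ux px s t x)
  have bd : ∀ x a b, |b| ≤ 1 → |a| ≤ 10 * GG n u φ nx ux px s t x →
      |b * a| ≤ 10 * GG n u φ nx ux px s t x := by
    intro x a b hb ha
    rw [abs_mul]
    calc |b| * |a| ≤ 1 * |a| := mul_le_mul_of_nonneg_right hb (abs_nonneg _)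
      _ ≤ _ := by linarith
  have b0 : ∀ x, |χ x| ≤ 1 := fun x => by rw [abs_of_nonneg (hχ.p0 x)]; exact hχ.p1 x
  have b1 : ∀ x, |χ1 x| ≤ 1 := fun x => by rw [abs_of_nonneg (hχ.q0 x)]; exact hχ.q1 x
  have e1 : ∀ x, |φ t x * Zf n u px s t x| ≤ 10 * GG n u φ nx ux px s t x := by
    intro x
    have := abs_mul_le' (φ t x) (Zf n u px s t x)
    linarith [GG_t n u φ nx ux px s t x, GG_Z n u φ nx ux px s t x, gnn x, sq_nonneg (px t x)]
  have e2 : ∀ x, |px t x * Zf n u px s t x| ≤ 10 * GG n u φ nx ux px s t x := by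
    intro x
    have := abs_mul_le' (px t x) (Zf n u px s t x)
    linarith [GG_t n u φ nx ux px s t x, GG_Z n u φ nx ux px s t x, gnn x, sq_nonneg (φ t x)]
  have e3 : ∀ x, |φ t x * (exp (φ t x) - exp (φ s x))| ≤ 10 * GG n u φ nx ux px s t x := by
    intro x
    have := abs_mul_le' (φ t x) (exp (φ t x) - exp (φ s x))
    linarith [GG_t n u φ nx ux px s t x, hP.qd_sq s t x, gnn x, sq_nonneg (px t x)]
  have e4 : ∀ x, |px t x * Kf n u s t x| ≤ 10 * GG n u φ nx ux px s t x := by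
    intro x
    have := abs_mul_le' (px t x) (Kf n u s t x)
    linarith [GG_t n u φ nx ux px s t x, GG_K n u φ nx ux px s t x, gnn x, sq_nonneg (φ t x)]
  have e5 : ∀ x, |PE φ px t x - PE φ px s x| ≤ 10 * GG n u φ nx ux px s t x := by
    intro x
    have h1 := hP.PE_le t x
    have h2 := hP.PE_le s x
    have h3 := PE_nonneg φ px t x
    have h4 := PE_nonneg φ px s x
    have h5 := SS_nonneg n u φ nx ux px t x
    have h6 := SS_nonneg n u φ nx ux px s x
    have h7 := sq_nonneg (Kf n u s t x)
    unfold GG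
    rw [abs_le]; constructor <;> linarith
  have e6 : ∀ x, |φ t x ^ 2| ≤ 10 * GG n u φ nx ux px s t x := by
    intro x
    rw [abs_of_nonneg (sq_nonneg _)]
    linarith [GG_t n u φ nx ux px s t x, gnn x, sq_nonneg (px t x)]
  have i1 : Integrable (fun x => χ x * (φ t x * Zf n u px s t x)) :=
    tool_int_dom (by fun_prop) (hP.hGG hst) 10 (fun x => bd x _ _ (b0 x) (e1 x))
  have i2 : Integrable (fun x => χ1 x * (φ t x * Zf n u px s t x)) :=
    tool_int_dom (by fun_prop) (hP.hGG hst) 10 (fun x => bd x _ _ (b1 x) (e1 x))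
  have i3 : Integrable (fun x => χ x * (px t x * Zf n u px s t x)) :=
    tool_int_dom (by fun_prop) (hP.hGG hst) 10 (fun x => bd x _ _ (b0 x) (e2 x))
  have i4 : Integrable (fun x => χ x * (φ t x * (exp (φ t x) - exp (φ s x)))) :=
    tool_int_dom (by fun_prop) (hP.hGG hst) 10 (fun x => bd x _ _ (b0 x) (e3 x))
  have i5 : Integrable (fun x => χ x * (px t x * Kf n u s t x)) :=
    tool_int_dom (by fun_prop) (hP.hGG hst) 10 (fun x => bd x _ _ (b0 x) (e4 x))
  have i6 : Integrable (fun x => χ x * (PE φ px t x - PE φ px s x)) :=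
    tool_int_dom (by fun_prop) (hP.hGG hst) 10 (fun x => bd x _ _ (b0 x) (e5 x))
  have i7 : Integrable (fun x => χ1 x * φ t x ^ 2) :=
    tool_int_dom (by fun_prop) (hP.hGG hst) 10 (fun x => bd x _ _ (b1 x) (e6 x))
  have i8 := (hP.dif2 h0 hη hχ hst).1
  have z : (∫ x, (χ1 x * (φ t x * Zf n u px s t x) +
      (χ x * (px t x * Zf n u px s t x) +
      χ x * (φ t x * (exp (φ t x) - exp (φ s x)))))) = 0 :=
    tool_int_zero (fun x => ((hχ.h1 x).mul
      ((hP.hpx t x).mul (hP.Zderiv s t x))).congr_deriv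
        (by simp only [Pi.mul_apply]; ring)) (i2.add (i3.add i4)) i1
  have m : (∫ x, χ x * (PE φ px t x - PE φ px s x)) ≤
      ∫ x, ((χ1 x * (φ t x * Zf n u px s t x) +
      (χ x * (px t x * Zf n u px s t x) +
      χ x * (φ t x * (exp (φ t x) - exp (φ s x))))) + ((χ x * (px t x * Kf n u s t x) +
       a / 2 * (χ1 x * φ t x ^ 2)) + 1 / (2 * a) * (χ1 x * Zf n u px s t x ^ 2))) := by
    refine integral_mono i6 ((i2.add (i3.add i4)).add ((i5.add (i7.const_mul _)).add
      (i8.const_mul _))) (fun x => ?_)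
    have f1 : PE φ px t x - PE φ px s x ≤ px t x * (Zf n u px s t x + Kf n u s t x) +
        φ t x * (exp (φ t x) - exp (φ s x)) := by
      have := Rex_convex (φ t x) (φ s x)
      unfold PE Zf
      nlinarith [sq_nonneg (px t x - px s x)]
    have f2 := mul_le_mul_of_nonneg_left f1 (hχ.p0 x)
    have f3 : 0 ≤ χ1 x * (a / 2 * φ t x ^ 2 + 1 / (2 * a) * Zf n u px s t x ^ 2
        + φ t x * Zf n u px s t x) := by
      refine mul_nonneg (hχ.q0 x) ?_
      have : a / 2 * φ t x ^ 2 + 1 / (2 * a) * Zf n u px s t x ^ 2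
        + φ t x * Zf n u px s t x = (a * φ t x + Zf n u px s t x) ^ 2 / (2 * a) := by
        field_simp; ring
      rw [this]; positivity
    simp only
    nlinarith
  have j1 : Integrable (fun x => χ1 x * (φ t x * Zf n u px s t x) +
      (χ x * (px t x * Zf n u px s t x) +
      χ x * (φ t x * (exp (φ t x) - exp (φ s x))))) := i2.add (i3.add i4)
  have j2 : Integrable (fun x => χ x * (px t x * Kf n u s t x) + a / 2 * (χ1 x * φ t x ^ 2)) :=
    i5.add (i7.const_mul _)
  have j3 : Integrable (fun x => (χ x * (px t x * Kf n u s t x) + a / 2 * (χ1 x * φ t x ^ 2)) +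
      1 / (2 * a) * (χ1 x * Zf n u px s t x ^ 2)) := j2.add (i8.const_mul _)
  rw [integral_add j1 j3, z, integral_add j2 (i8.const_mul _),
      integral_add i5 (i7.const_mul _), integral_const_mul, integral_const_mul] at m
  linarith

end Pack



namespace Pack

variable {w wd W : ℝ → ℝ} {n u φ nt nx ut ux px : ℝ → ℝ → ℝ} {M : ℝ}

def HD (W : ℝ → ℝ) (n u : ℝ → ℝ → ℝ) (t x : ℝ) : ℝ := (1/2) * (1 + n t x) * u t x ^ 2 + W (n t x)

def BB (w : ℝ → ℝ) (n u : ℝ → ℝ → ℝ) (t x : ℝ) : ℝ := u t x ^ 2 / 2 + w (n t x)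

def HT (w : ℝ → ℝ) (n u nt ut : ℝ → ℝ → ℝ) (t x : ℝ) : ℝ :=
  (1/2) * nt t x * u t x ^ 2 + (1 + n t x) * u t x * ut t x + w (n t x) * nt t x

lemma ccomp (hP : Pack w wd W n u φ nt nx ut ux px M) {f g : ℝ → ℝ}
    (h : ∀ a, |a| ≤ 1/2 → HasDerivAt f (g a) a) :
    Continuous (Function.uncurry (fun t x => f (n t x))) := by
  have := hP.cn
  rw [continuous_iff_continuousAt]
  rintro ⟨t, x⟩
  exact ContinuousAt.comp (f := Function.uncurry n) (x := (t, x)) (g := f)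
    (h _ (hP.bn t x)).continuousAt this.continuousAt

lemma cHD (hP : Pack w wd W n u φ nt nx ut ux px M) :
    Continuous (Function.uncurry (HD W n u)) := by
  have h1 := hP.ccomp hP.hW
  have h2 := hP.cn
  have h3 := hP.cu
  exact ((continuous_const.mul (continuous_const.add h2)).mul (h3.pow 2)).add h1

lemma cBB (hP : Pack w wd W n u φ nt nx ut ux px M) :
    Continuous (Function.uncurry (BB w n u)) := by
  have h1 := hP.ccomp hP.hw
  have h3 := hP.cu
  exact ((h3.pow 2).div_const 2).add h1

lemma cHT (hP : Pack w wd W n u φ nt nx ut ux px M) :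
    Continuous (Function.uncurry (HT w n u nt ut)) := by
  have h1 := hP.ccomp hP.hw
  have h2 := hP.cn
  have h3 := hP.cu
  have h4 := hP.cnt
  have h5 := hP.cut
  exact (((continuous_const.mul h4).mul (h3.pow 2)).add
    (((continuous_const.add h2).mul h3).mul h5)).add (h1.mul h4)

lemma HD_nonneg (hP : Pack w wd W n u φ nt nx ut ux px M) (t x : ℝ) : 0 ≤ HD W n u t x := by
  have h := abs_le.1 (hP.bn t x)
  have h2 := hP.bW0 _ (hP.bn t x)
  have h3 : 0 ≤ (1/2) * (1 + n t x) := by linarith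
  unfold HD
  positivity

lemma HD_le (hP : Pack w wd W n u φ nt nx ut ux px M) (t x : ℝ) :
    HD W n u t x ≤ M * (n t x ^ 2 + u t x ^ 2) := by
  have h := abs_le.1 (hP.bn t x)
  have h2 := hP.bW _ (hP.bn t x)
  have h3 := hP.M1
  unfold HD
  nlinarith [sq_nonneg (u t x)]

lemma HD_le' (hP : Pack w wd W n u φ nt nx ut ux px M) (t x : ℝ) :
    HD W n u t x ≤ M * SS n u φ nx ux px t x := by
  refine (hP.HD_le t x).trans (mul_le_mul_of_nonneg_left ?_ (by linarith [hP.M1]))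
  linarith [SS_ge n u φ nx ux px t x, sq_nonneg (φ t x), sq_nonneg (px t x)]

lemma nt_sq (hP : Pack w wd W n u φ nt nx ut ux px M) (t x : ℝ) :
    nt t x ^ 2 ≤ 5 * SS n u φ nx ux px t x := by
  have h := abs_le.1 (hP.bn t x)
  have h2 := abs_le.1 (hP.bu t x)
  have e1 : (nx t x * u t x) ^ 2 ≤ nx t x ^ 2 := by
    rw [mul_pow]
    have : u t x ^ 2 ≤ 1 := by nlinarith [h2.1, h2.2]
    nlinarith [sq_nonneg (nx t x)]
  have e2 : ((1 + n t x) * ux t x) ^ 2 ≤ 9/4 * ux t x ^ 2 := by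
    rw [mul_pow]
    have : (1 + n t x) ^ 2 ≤ 9/4 := by nlinarith [h.1, h.2]
    nlinarith [sq_nonneg (ux t x)]
  rw [hP.eqn]
  unfold SS
  nlinarith [sq_nonneg (nx t x * u t x - (1 + n t x) * ux t x), sq_nonneg (n t x),
    sq_nonneg (u t x), sq_nonneg (φ t x), sq_nonneg (px t x), sq_nonneg (nx t x),
    sq_nonneg (ux t x)]

lemma ut_sq (hP : Pack w wd W n u φ nt nx ut ux px M) (t x : ℝ) :
    ut t x ^ 2 ≤ 3 * M ^ 2 * SS n u φ nx ux px t x := by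
  have h2 := abs_le.1 (hP.bu t x)
  have hM := hP.M1
  have hM2 : 1 ≤ M ^ 2 := by nlinarith
  have e1 : (u t x * ux t x) ^ 2 ≤ M ^ 2 * ux t x ^ 2 := by
    rw [mul_pow]
    have : u t x ^ 2 ≤ 1 := by nlinarith [h2.1, h2.2]
    nlinarith [sq_nonneg (ux t x)]
  have e2 : (wd (n t x) * nx t x) ^ 2 ≤ M ^ 2 * nx t x ^ 2 := by
    rw [mul_pow]
    have : wd (n t x) ^ 2 ≤ M ^ 2 := by
      apply sq_le_sq.2
      rw [abs_of_nonneg (by linarith : 0 ≤ M)]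
      exact hP.bwd _ (hP.bn t x)
    nlinarith [sq_nonneg (nx t x)]
  have e3 : px t x ^ 2 ≤ M ^ 2 * px t x ^ 2 := by nlinarith [sq_nonneg (px t x)]
  have e4 : ut t x ^ 2 ≤ 3 * ((u t x * ux t x) ^ 2 + (wd (n t x) * nx t x) ^ 2 + px t x ^ 2) := by
    rw [hP.equ]
    nlinarith [sq_nonneg (u t x * ux t x - wd (n t x) * nx t x),
      sq_nonneg (u t x * ux t x - px t x), sq_nonneg (wd (n t x) * nx t x - px t x)]
  have e5 : ux t x ^ 2 + nx t x ^ 2 + px t x ^ 2 ≤ SS n u φ nx ux px t x := by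
    unfold SS
    nlinarith [sq_nonneg (n t x), sq_nonneg (u t x), sq_nonneg (φ t x)]
  have e6 := mul_le_mul_of_nonneg_left e5 (by positivity : 0 ≤ M ^ 2)
  nlinarith

lemma HT_bd (hP : Pack w wd W n u φ nt nx ut ux px M) (t x : ℝ) :
    |HT w n u nt ut t x| ≤ 10 * M ^ 2 * SS n u φ nx ux px t x := by
  have hn := abs_le.1 (hP.bn t x)
  have hu := hP.bu t x
  have hM := hP.M1
  have hM2 : M ≤ M ^ 2 := by nlinarith
  have h1 := hP.nt_sq t x
  have h2 := hP.ut_sq t x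
  have h0 := SS_nonneg n u φ nx ux px t x
  have h3 := SS_ge n u φ nx ux px t x
  have hs1 : n t x ^ 2 ≤ SS n u φ nx ux px t x := by
    linarith [sq_nonneg (u t x), sq_nonneg (φ t x), sq_nonneg (px t x)]
  have hs2 : u t x ^ 2 ≤ SS n u φ nx ux px t x := by
    linarith [sq_nonneg (n t x), sq_nonneg (φ t x), sq_nonneg (px t x)]
  set S := SS n u φ nx ux px t x
  have f1 : |(1/2) * nt t x * u t x ^ 2| ≤ 1 * S := by
    have e : (1/2) * nt t x * u t x ^ 2 = (u t x / 2) * (nt t x * u t x) := by ring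
    rw [e, abs_mul]
    have a1 : |u t x / 2| ≤ 1/4 := by rw [abs_div, abs_two]; linarith
    have a2 := abs_mul_le' (nt t x) (u t x)
    calc |u t x / 2| * |nt t x * u t x| ≤ 1/4 * |nt t x * u t x| :=
          mul_le_mul_of_nonneg_right a1 (abs_nonneg _)
      _ ≤ _ := by linarith
  have f2 : |(1 + n t x) * u t x * ut t x| ≤ 3/4 * (S + 3 * M ^ 2 * S) := by
    rw [mul_assoc, abs_mul]
    have a1 : |1 + n t x| ≤ 3/2 := by rw [abs_le]; constructor <;> linarith
    have a2 := abs_mul_le' (u t x) (ut t x)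
    calc |1 + n t x| * |u t x * ut t x| ≤ 3/2 * |u t x * ut t x| :=
          mul_le_mul_of_nonneg_right a1 (abs_nonneg _)
      _ ≤ _ := by linarith
  have f3 : |w (n t x) * nt t x| ≤ M * (3 * S) := by
    have a1 := hP.bw _ (hP.bn t x)
    rw [abs_mul]
    calc |w (n t x)| * |nt t x| ≤ M * |n t x| * |nt t x| :=
          mul_le_mul_of_nonneg_right a1 (abs_nonneg _)
      _ = M * |n t x * nt t x| := by rw [abs_mul]; ring
      _ ≤ M * (3 * S) := by
          have := abs_mul_le' (n t x) (nt t x)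
          exact mul_le_mul_of_nonneg_left (by linarith) (by linarith)
  have g1 : M * S ≤ M ^ 2 * S := mul_le_mul_of_nonneg_right hM2 h0
  have g2 : 1 * S ≤ M * S := mul_le_mul_of_nonneg_right hM h0
  unfold HT
  refine (abs_add_le _ _).trans ((add_le_add_left (abs_add_le _ _) _).trans ?_)
  linarith

lemma HDt (hP : Pack w wd W n u φ nt nx ut ux px M) (s t x : ℝ) :
    ∫ τ in s..t, HT w n u nt ut τ x = HD W n u t x - HD W n u s x := by
  refine intervalIntegral.integral_eq_sub_of_hasDerivAt (f := fun τ => HD W n u τ x)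
    (fun τ _ => ?_) ((ctime hP.cHT x).intervalIntegrable _ _)
  have h1 := (((hP.hnt τ x).const_add 1).const_mul (1/2)).mul ((hP.hut τ x).pow 2)
  have h2 := (hP.hW _ (hP.bn τ x)).comp τ (hP.hnt τ x)
  exact (h1.add h2).congr_deriv (by unfold HT; simp; ring)

lemma hyd1 (hP : Pack w wd W n u φ nt nx ut ux px M) {χ : ℝ → ℝ} (cχ : Continuous χ)
    (bχ : ∀ x, |χ x| ≤ 1) {s t : ℝ} (hst : s ≤ t) :
    (∫ x, χ x * (HD W n u t x - HD W n u s x)) = (∫ τ in s..t, ∫ x, χ x * HT w n u nt ut τ x) ∧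
    IntervalIntegrable (fun τ => ∫ x, χ x * HT w n u nt ut τ x) volume s t ∧
    ∀ τ, Integrable (fun x => χ x * HT w n u nt ut τ x) := by
  have hc : Continuous (Function.uncurry (fun τ x => χ x * HT w n u nt ut τ x)) :=
    (cχ.comp continuous_snd).mul hP.cHT
  obtain ⟨-, b, c, d⟩ := tool_fubini' (G := fun _ => 0) hc hst (10 * M ^ 2) M (by positivity)
    hP.hSS hP.bSS
    (integrable_zero _ _ _) (fun τ x => by
      rw [abs_mul, add_zero]
      have := hP.HT_bd τ x
      calc |χ x| * |HT w n u nt ut τ x| ≤ 1 * |HT w n u nt ut τ x| :=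
            mul_le_mul_of_nonneg_right (bχ x) (abs_nonneg _)
        _ ≤ _ := by linarith)
  refine ⟨?_, c, d⟩
  rw [← b]
  congr 1; funext x
  rw [intervalIntegral.integral_const_mul, hP.HDt]

lemma hyd3 (hP : Pack w wd W n u φ nt nx ut ux px M) {χ : ℝ → ℝ} (cχ : Continuous χ)
    (bχ : ∀ x, |χ x| ≤ 1) {s t : ℝ} (hst : s ≤ t) :
    |∫ x, χ x * (HD W n u t x - HD W n u s x)| ≤ 10 * M ^ 3 * (t - s) := by
  obtain ⟨a, b, c⟩ := hP.hyd1 cχ bχ hst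
  rw [a]
  have h := intervalIntegral.norm_integral_le_of_norm_le_const (a := s) (b := t)
    (f := fun τ => ∫ x, χ x * HT w n u nt ut τ x) (C := 10 * M ^ 3) (fun τ _ => by
      refine (norm_integral_le_integral_norm _).trans ?_
      have h1 : ∫ x, ‖χ x * HT w n u nt ut τ x‖ ≤ ∫ x, 10 * M ^ 2 * SS n u φ nx ux px τ x :=
        integral_mono (c τ).norm ((hP.hSS τ).const_mul _) (fun x => by
          have := hP.HT_bd τ x
          simp only [norm_eq_abs, abs_mul]
          calc |χ x| * |HT w n u nt ut τ x| ≤ 1 * |HT w n u nt ut τ x| :=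
                mul_le_mul_of_nonneg_right (bχ x) (abs_nonneg _)
            _ ≤ _ := by linarith)
      rw [integral_const_mul] at h1
      have h2 := mul_le_mul_of_nonneg_left (hP.bSS τ) (by positivity : 0 ≤ 10 * M ^ 2)
      calc _ ≤ _ := h1
        _ ≤ _ := h2
        _ = _ := by ring)
  rw [norm_eq_abs, abs_of_nonneg (by linarith : 0 ≤ t - s)] at h
  exact h

lemma JB_bd (hP : Pack w wd W n u φ nt nx ut ux px M) (t x : ℝ) :
    |J n u t x * BB w n u t x| ≤ 5 * M ^ 2 * SS n u φ nx ux px t x := by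
  have hM := hP.M1
  have hM2 : 1 ≤ M ^ 2 := by nlinarith
  have h1 := abs_mul_le' (J n u t x) (BB w n u t x)
  have h2 := hP.J_sq' t x
  have h0 := SS_nonneg n u φ nx ux px t x
  have h3 := SS_ge n u φ nx ux px t x
  have hu := abs_le.1 (hP.bu t x)
  have e1 : (u t x ^ 2 / 2) ^ 2 ≤ M ^ 2 * u t x ^ 2 := by
    have : u t x ^ 2 ≤ 1 := by nlinarith [hu.1, hu.2]
    nlinarith [sq_nonneg (u t x)]
  have e2 : w (n t x) ^ 2 ≤ M ^ 2 * n t x ^ 2 := by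
    rw [← mul_pow]
    apply sq_le_sq.2
    rw [abs_mul, abs_of_nonneg (by linarith : 0 ≤ M)]
    exact hP.bw _ (hP.bn t x)
  have e3 : BB w n u t x ^ 2 ≤ 2 * M ^ 2 * SS n u φ nx ux px t x := by
    have : BB w n u t x ^ 2 ≤ 2 * ((u t x ^ 2 / 2) ^ 2 + w (n t x) ^ 2) := by
      unfold BB
      nlinarith [sq_nonneg (u t x ^ 2 / 2 - w (n t x))]
    have h4 : n t x ^ 2 + u t x ^ 2 ≤ SS n u φ nx ux px t x := by
      linarith [sq_nonneg (φ t x), sq_nonneg (px t x)]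
    have := mul_le_mul_of_nonneg_left h4 (by positivity : 0 ≤ M ^ 2)
    nlinarith
  nlinarith

lemma hyd2 (hP : Pack w wd W n u φ nt nx ut ux px M) {χ χ1 χ2 : ℝ → ℝ} {η : ℝ}
    (hχ : Weight χ χ1 χ2 η) (τ : ℝ) :
    Integrable (fun x => χ1 x * (J n u τ x * BB w n u τ x)) ∧
    Integrable (fun x => χ x * (J n u τ x * px τ x)) ∧
    (∫ x, χ x * HT w n u nt ut τ x) =
      (∫ x, χ1 x * (J n u τ x * BB w n u τ x)) - ∫ x, χ x * (J n u τ x * px τ x) := by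
  have c0 : Continuous χ := continuous_iff_continuousAt.2 (fun x => (hχ.h1 x).continuousAt)
  have c1 : Continuous χ1 := continuous_iff_continuousAt.2 (fun x => (hχ.h2 x).continuousAt)
  have b0 : ∀ x, |χ x| ≤ 1 := fun x => by rw [abs_of_nonneg (hχ.p0 x)]; exact hχ.p1 x
  have b1 : ∀ x, |χ1 x| ≤ 1 := fun x => by rw [abs_of_nonneg (hχ.q0 x)]; exact hχ.q1 x
  have cJ := cslice hP.cJ τ
  have cB := cslice hP.cBB τ
  have cp := cslice hP.cpx τ
  have i1 : Integrable (fun x => χ1 x * (J n u τ x * BB w n u τ x)) :=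
    tool_int_dom (by fun_prop) (hP.hSS τ) (5 * M ^ 2) (fun x => by
      rw [abs_mul]
      have := hP.JB_bd τ x
      calc |χ1 x| * |J n u τ x * BB w n u τ x| ≤ 1 * |J n u τ x * BB w n u τ x| :=
            mul_le_mul_of_nonneg_right (b1 x) (abs_nonneg _)
        _ ≤ _ := by linarith)
  have i1' : Integrable (fun x => χ x * (J n u τ x * BB w n u τ x)) :=
    tool_int_dom (by fun_prop) (hP.hSS τ) (5 * M ^ 2) (fun x => by
      rw [abs_mul]
      have := hP.JB_bd τ x
      calc |χ x| * |J n u τ x * BB w n u τ x| ≤ 1 * |J n u τ x * BB w n u τ x| :=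
            mul_le_mul_of_nonneg_right (b0 x) (abs_nonneg _)
        _ ≤ _ := by linarith)
  have i2 : Integrable (fun x => χ x * (J n u τ x * px τ x)) :=
    tool_int_dom (by fun_prop) (hP.hSS τ) 2 (fun x => by
      rw [abs_mul]
      have h1 := hP.J_sq' τ x
      have h2 := SS_ge n u φ nx ux px τ x
      have h3 := abs_mul_le' (J n u τ x) (px τ x)
      calc |χ x| * |J n u τ x * px τ x| ≤ 1 * |J n u τ x * px τ x| :=
            mul_le_mul_of_nonneg_right (b0 x) (abs_nonneg _)
        _ ≤ _ := by
          linarith [sq_nonneg (n τ x), sq_nonneg (u τ x), sq_nonneg (φ τ x), sq_nonneg (px τ x)])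
  have i3 := (hP.hyd1 c0 b0 (le_refl 0)).2.2 τ
  refine ⟨i1, i2, ?_⟩
  have j : Integrable (fun x => (χ1 x * (J n u τ x * BB w n u τ x) -
    χ x * (J n u τ x * px τ x))) := i1.sub i2
  have z : (∫ x, ((χ1 x * (J n u τ x * BB w n u τ x) - χ x * (J n u τ x * px τ x)) -
      χ x * HT w n u nt ut τ x)) = 0 := by
    refine tool_int_zero (F := fun x => χ x * (J n u τ x * BB w n u τ x)) (fun x => ?_)
      (j.sub i3) i1'
    have d1 : HasDerivAt (J n u τ) (-nt τ x) x :=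
      (((hP.hnx τ x).const_add 1).mul (hP.hux τ x)).congr_deriv (by rw [hP.eqn]; ring)
    have d2 : HasDerivAt (BB w n u τ) (-ut τ x - px τ x) x :=
      ((((hP.hux τ x).pow 2).div_const 2).add
        ((hP.hw _ (hP.bn τ x)).comp x (hP.hnx τ x))).congr_deriv (by rw [hP.equ]; simp; ring)
    exact ((hχ.h1 x).mul (d1.mul d2)).congr_deriv (by
      simp only [Pi.mul_apply, HT, J, BB]; ring)
  rw [integral_sub j i3, integral_sub i1 i2] at z
  linarith

end Pack



namespace Pack

variable {w wd W : ℝ → ℝ} {n u φ nt nx ut ux px : ℝ → ℝ → ℝ} {M : ℝ}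

def EE (W : ℝ → ℝ) (n u φ px : ℝ → ℝ → ℝ) (t x : ℝ) : ℝ := HD W n u t x + PE φ px t x

lemma cEE (hP : Pack w wd W n u φ nt nx ut ux px M) (t : ℝ) : Continuous (EE W n u φ px t) :=
  (cslice hP.cHD t).add (hP.cPE t)

lemma EE_nonneg (hP : Pack w wd W n u φ nt nx ut ux px M) (t x : ℝ) : 0 ≤ EE W n u φ px t x :=
  add_nonneg (hP.HD_nonneg t x) (PE_nonneg φ px t x)

lemma EE_le (hP : Pack w wd W n u φ nt nx ut ux px M) (t x : ℝ) :
    EE W n u φ px t x ≤ 3 * M * SS n u φ nx ux px t x := by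
  have h1 := hP.HD_le' t x
  have h2 := hP.PE_le t x
  have h3 := mul_le_mul_of_nonneg_right hP.M1 (SS_nonneg n u φ nx ux px t x)
  unfold EE
  linarith

lemma iEE (hP : Pack w wd W n u φ nt nx ut ux px M) {χ : ℝ → ℝ} (cχ : Continuous χ)
    (bχ : ∀ x, |χ x| ≤ 1) (t : ℝ) {f : ℝ → ℝ} (cf : Continuous f) (f0 : ∀ x, 0 ≤ f x)
    (f1 : ∀ x, f x ≤ EE W n u φ px t x) : Integrable (fun x => χ x * f x) :=
  tool_int_dom (by fun_prop) (hP.hSS t) (3 * M) (fun x => by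
    rw [abs_mul, abs_of_nonneg (f0 x)]
    have := (f1 x).trans (hP.EE_le t x)
    calc |χ x| * f x ≤ 1 * f x := mul_le_mul_of_nonneg_right (bχ x) (f0 x)
      _ ≤ _ := by linarith)

lemma combine (hP : Pack w wd W n u φ nt nx ut ux px M) {χ χ1 χ2 : ℝ → ℝ} {η s0 σ : ℝ}
    (h0 : 0 ≤ η) (hη : η < 1) (hs0 : 0 < s0) (hσ : 0 < σ)
    (hχ : Weight χ χ1 χ2 η)
    (P1 : ∀ t x, J n u t x * BB w n u t x + 1 / (2 * s0 * (1 - η)) * J n u t x ^ 2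
      ≤ σ * HD W n u t x)
    (P2 : ∀ t x, s0 / 2 * φ t x ^ 2 ≤ σ * Rex (φ t x))
    {s t : ℝ} (hst : s < t) :
    (∫ x, χ x * (EE W n u φ px t x - EE W n u φ px s x)) ≤
      σ * (t - s) * (∫ x, χ1 x * EE W n u φ px t x) + (10 * σ * M ^ 3 + 3 * M) * (t - s) ^ 2 := by
  have c0 : Continuous χ := continuous_iff_continuousAt.2 (fun x => (hχ.h1 x).continuousAt)
  have c1 : Continuous χ1 := continuous_iff_continuousAt.2 (fun x => (hχ.h2 x).continuousAt)
  have b0 : ∀ x, |χ x| ≤ 1 := fun x => by rw [abs_of_nonneg (hχ.p0 x)]; exact hχ.p1 x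
  have b1 : ∀ x, |χ1 x| ≤ 1 := fun x => by rw [abs_of_nonneg (hχ.q0 x)]; exact hχ.q1 x
  have hh : 0 < t - s := by linarith
  have h1η : 0 < 1 - η := by linarith
  have hM := hP.M1
  have hHD : ∀ r x, HD W n u r x ≤ EE W n u φ px r x := fun r x => by
    unfold EE; linarith [PE_nonneg φ px r x]
  have hPE : ∀ r x, PE φ px r x ≤ EE W n u φ px r x := fun r x => by
    unfold EE; linarith [hP.HD_nonneg r x]
  have iH : ∀ r, Integrable (fun x => χ x * HD W n u r x) := fun r =>
    hP.iEE c0 b0 r (cslice hP.cHD r) (hP.HD_nonneg r) (hHD r)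
  have iH1 : ∀ r, Integrable (fun x => χ1 x * HD W n u r x) := fun r =>
    hP.iEE c1 b1 r (cslice hP.cHD r) (hP.HD_nonneg r) (hHD r)
  have iP : ∀ r, Integrable (fun x => χ x * PE φ px r x) := fun r =>
    hP.iEE c0 b0 r (hP.cPE r) (PE_nonneg φ px r) (hPE r)
  have iP1 : ∀ r, Integrable (fun x => χ1 x * PE φ px r x) := fun r =>
    hP.iEE c1 b1 r (hP.cPE r) (PE_nonneg φ px r) (hPE r)
  -- splitting
  have iHd : Integrable (fun x => χ x * (HD W n u t x - HD W n u s x)) :=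
    ((iH t).sub (iH s)).congr (Filter.Eventually.of_forall fun x => by
      simp only [Pi.sub_apply]; ring)
  have iPd : Integrable (fun x => χ x * (PE φ px t x - PE φ px s x)) :=
    ((iP t).sub (iP s)).congr (Filter.Eventually.of_forall fun x => by
      simp only [Pi.sub_apply]; ring)
  have split : (∫ x, χ x * (EE W n u φ px t x - EE W n u φ px s x)) =
      (∫ x, χ x * (HD W n u t x - HD W n u s x)) + ∫ x, χ x * (PE φ px t x - PE φ px s x) := by
    rw [← integral_add iHd iPd]
    congr 1; funext x; unfold EE; ring
  obtain ⟨A1, A2, -⟩ := hP.hyd1 c0 b0 hst.le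
  have B1 := hP.dif3 h0 hη hχ hst (mul_pos hh hs0)
  have B2 := (hP.dif2 h0 hη hχ hst).2
  -- Fubini for px_t K
  have cpt := cslice hP.cpx t
  have ccJ := hP.cJ
  have hc : Continuous (Function.uncurry (fun τ x => χ x * (px t x * J n u τ x))) :=
    (c0.comp continuous_snd).mul ((cpt.comp continuous_snd).mul ccJ)
  have ipt : Integrable (fun x => px t x ^ 2) :=
    tool_int_dom (by fun_prop) (hP.hSS t) 1 (fun x => by
      rw [abs_of_nonneg (sq_nonneg _)]
      linarith [SS_ge n u φ nx ux px t x, sq_nonneg (n t x), sq_nonneg (u t x),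
        sq_nonneg (φ t x)])
  obtain ⟨-, C1, C2, C3⟩ := tool_fubini' (G := fun x => px t x ^ 2) hc hst.le 2 M (by norm_num)
    hP.hSS hP.bSS ipt (fun τ x => by
      rw [abs_mul]
      have e1 := abs_mul_le' (px t x) (J n u τ x)
      have e2 := hP.J_sq' τ x
      have e3 := SS_nonneg n u φ nx ux px τ x
      calc |χ x| * |px t x * J n u τ x| ≤ 1 * |px t x * J n u τ x| :=
            mul_le_mul_of_nonneg_right (b0 x) (abs_nonneg _)
        _ ≤ _ := by linarith [sq_nonneg (px t x)])
  have C1' : (∫ x, χ x * (px t x * Kf n u s t x)) =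
      ∫ τ in s..t, ∫ x, χ x * (px t x * J n u τ x) := by
    rw [← C1]
    congr 1; funext x
    rw [intervalIntegral.integral_const_mul, intervalIntegral.integral_const_mul]
    rfl
  -- Fubini for χ1 J²
  have hc2 : Continuous (Function.uncurry (fun τ x => χ1 x * J n u τ x ^ 2)) :=
    (c1.comp continuous_snd).mul (ccJ.pow 2)
  obtain ⟨-, -, D2, D3⟩ := tool_fubini' (G := fun _ => 0) hc2 hst.le 3 M (by norm_num)
    hP.hSS hP.bSS (integrable_zero _ _ _) (fun τ x => by
      rw [abs_of_nonneg (mul_nonneg (hχ.q0 x) (sq_nonneg _))]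
      have := hP.J_sq' τ x
      nlinarith [hχ.q0 x, hχ.q1 x, sq_nonneg (J n u τ x)])
  have iJ : ∀ τ, Integrable (fun x => J n u τ x ^ 2) := fun τ =>
    tool_int_dom ((cslice ccJ τ).pow 2) (hP.hSS τ) 3 (fun x => by
      rw [abs_of_nonneg (sq_nonneg _)]; exact hP.J_sq' τ x)
  have bJ : ∀ τ, ∫ x, J n u τ x ^ 2 ≤ 3 * M := by
    intro τ
    have := integral_mono (iJ τ) ((hP.hSS τ).const_mul 3) (hP.J_sq' τ)
    rw [integral_const_mul] at this
    linarith [hP.bSS τ]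
  -- per-time estimate
  set c := 1 / (2 * s0 * (1 - η)) with hcdef
  have key : ∀ τ ∈ Set.Ioo s t, ((∫ x, χ x * HT w n u nt ut τ x) +
      (∫ x, χ x * (px t x * J n u τ x))) + c * (∫ x, χ1 x * J n u τ x ^ 2) ≤
      σ * (∫ x, χ1 x * HD W n u t x) + (10 * σ * M ^ 3 + 3 * M) * (t - s) := by
    intro τ hτ
    obtain ⟨k1, k2, k3⟩ := hP.hyd2 hχ τ
    rw [k3]
    have m1 : (∫ x, χ1 x * (J n u τ x * BB w n u τ x)) + c * (∫ x, χ1 x * J n u τ x ^ 2)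
        ≤ σ * ∫ x, χ1 x * HD W n u τ x := by
      rw [← integral_const_mul, ← integral_const_mul, ← integral_add k1 ((D3 τ).const_mul c)]
      refine integral_mono (k1.add ((D3 τ).const_mul c)) ((iH1 τ).const_mul σ) (fun x => ?_)
      have := mul_le_mul_of_nonneg_left (P1 τ x) (hχ.q0 x)
      simp only [Pi.add_apply]
      linarith
    have m2 : (∫ x, χ1 x * HD W n u τ x) ≤ (∫ x, χ1 x * HD W n u t x) + 10 * M ^ 3 * (t - s) := by
      have := hP.hyd3 c1 b1 hτ.2.le
      have e : (∫ x, χ1 x * (HD W n u t x - HD W n u τ x)) =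
          (∫ x, χ1 x * HD W n u t x) - ∫ x, χ1 x * HD W n u τ x := by
        rw [← integral_sub (iH1 t) (iH1 τ)]
        congr 1; funext x; ring
      rw [e] at this
      have h1 := (abs_le.1 this).1
      have h2 : 10 * M ^ 3 * (t - τ) ≤ 10 * M ^ 3 * (t - s) :=
        mul_le_mul_of_nonneg_left (by linarith [hτ.1]) (by positivity)
      linarith
    have m3 : (∫ x, χ x * (px t x * J n u τ x)) - (∫ x, χ x * (J n u τ x * px τ x)) ≤
        3 * M * (t - s) := by
      obtain ⟨d1, d2⟩ := hP.dif1 hτ.2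
      rw [← integral_sub (C3 τ) k2]
      have : (∫ x, (χ x * (px t x * J n u τ x) - χ x * (J n u τ x * px τ x))) ≤
          ∫ x, ((t - s) / 2 * J n u τ x ^ 2 + 1 / (2 * (t - s)) * (px t x - px τ x) ^ 2) := by
        refine integral_mono ((C3 τ).sub k2) (((iJ τ).const_mul _).add (d1.const_mul _))
          (fun x => ?_)
        have f1 : χ x * (px t x * J n u τ x) - χ x * (J n u τ x * px τ x) =
          χ x * (J n u τ x * (px t x - px τ x)) := by ring
        have f2 : |J n u τ x * (px t x - px τ x)| ≤
            (t - s) / 2 * J n u τ x ^ 2 + 1 / (2 * (t - s)) * (px t x - px τ x) ^ 2 := by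
          have e1 : (t - s) / 2 * J n u τ x ^ 2 + 1 / (2 * (t - s)) * (px t x - px τ x) ^ 2 -
            J n u τ x * (px t x - px τ x) =
            ((t - s) * J n u τ x - (px t x - px τ x)) ^ 2 / (2 * (t - s)) := by
              field_simp; ring
          have e2 : (t - s) / 2 * J n u τ x ^ 2 + 1 / (2 * (t - s)) * (px t x - px τ x) ^ 2 +
            J n u τ x * (px t x - px τ x) =
            ((t - s) * J n u τ x + (px t x - px τ x)) ^ 2 / (2 * (t - s)) := by
              field_simp; ring
          have p1 : 0 ≤ ((t - s) * J n u τ x - (px t x - px τ x)) ^ 2 / (2 * (t - s)) := by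
            positivity
          have p2 : 0 ≤ ((t - s) * J n u τ x + (px t x - px τ x)) ^ 2 / (2 * (t - s)) := by
            positivity
          rw [abs_le]; constructor <;> linarith
        simp only
        rw [f1]
        refine (le_abs_self _).trans ?_
        rw [abs_mul]
        calc |χ x| * _ ≤ 1 * |J n u τ x * (px t x - px τ x)| :=
              mul_le_mul_of_nonneg_right (b0 x) (abs_nonneg _)
          _ ≤ _ := by linarith
      rw [integral_add ((iJ τ).const_mul _) (d1.const_mul _), integral_const_mul,
        integral_const_mul] at this
      have g1 : (t - s) / 2 * ∫ x, J n u τ x ^ 2 ≤ (t - s) / 2 * (3 * M) :=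
        mul_le_mul_of_nonneg_left (bJ τ) (by positivity)
      have g2 : (∫ x, (px t x - px τ x) ^ 2) ≤ 3 * M * (t - s) ^ 2 := by
        refine d2.trans (mul_le_mul_of_nonneg_left ?_ (by positivity))
        exact pow_le_pow_left₀ (by linarith [hτ.2]) (by linarith [hτ.1]) 2
      have g3 := mul_le_mul_of_nonneg_left g2 (by positivity : 0 ≤ 1 / (2 * (t - s)))
      have g4 : 1 / (2 * (t - s)) * (3 * M * (t - s) ^ 2) = 3 * M * (t - s) / 2 := by
        field_simp
      linarith
    have m4 := mul_le_mul_of_nonneg_left m2 hσ.le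
    nlinarith
  have I1 := A2.add C2
  have I2 := I1.add (D2.const_mul c)
  have big := intervalIntegral.integral_mono_on_of_le_Ioo hst.le I2
    (g := fun _ => σ * (∫ x, χ1 x * HD W n u t x) + (10 * σ * M ^ 3 + 3 * M) * (t - s))
    (by simp) key
  have bigL : (∫ τ in s..t, (((∫ x, χ x * HT w n u nt ut τ x) +
      (∫ x, χ x * (px t x * J n u τ x))) + c * (∫ x, χ1 x * J n u τ x ^ 2))) =
      (∫ τ in s..t, ∫ x, χ x * HT w n u nt ut τ x) +
      (∫ τ in s..t, ∫ x, χ x * (px t x * J n u τ x)) +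
      c * ∫ τ in s..t, ∫ x, χ1 x * J n u τ x ^ 2 := by
    rw [intervalIntegral.integral_add I1 (D2.const_mul c), intervalIntegral.integral_const_mul,
      ← intervalIntegral.integral_add A2 C2]
  have big2 : (∫ τ in s..t, ∫ x, χ x * HT w n u nt ut τ x) +
      (∫ τ in s..t, ∫ x, χ x * (px t x * J n u τ x)) +
      c * (∫ τ in s..t, ∫ x, χ1 x * J n u τ x ^ 2) ≤
      (t - s) * (σ * (∫ x, χ1 x * HD W n u t x) + (10 * σ * M ^ 3 + 3 * M) * (t - s)) := by
    rw [← bigL]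
    refine big.trans (le_of_eq ?_)
    rw [intervalIntegral.integral_const, smul_eq_mul]
  -- Z² term
  have Zt : 1 / (2 * ((t - s) * s0)) * (∫ x, χ1 x * Zf n u px s t x ^ 2) ≤
      c * ∫ τ in s..t, ∫ x, χ1 x * J n u τ x ^ 2 := by
    have e := mul_le_mul_of_nonneg_left B2
      (by positivity : 0 ≤ 1 / (2 * ((t - s) * s0) * (1 - η)))
    have e1 : 1 / (2 * ((t - s) * s0) * (1 - η)) * ((1 - η) * ∫ x, χ1 x * Zf n u px s t x ^ 2)
        = 1 / (2 * ((t - s) * s0)) * (∫ x, χ1 x * Zf n u px s t x ^ 2) := by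
      field_simp
    have e2 : 1 / (2 * ((t - s) * s0) * (1 - η)) *
        ((t - s) * ∫ τ in s..t, ∫ x, χ1 x * J n u τ x ^ 2) =
        c * ∫ τ in s..t, ∫ x, χ1 x * J n u τ x ^ 2 := by
      rw [hcdef]; field_simp
    rw [e1, e2] at e
    exact e
  have cφt := hP.cφ t
  have iφ : Integrable (fun x => χ1 x * φ t x ^ 2) :=
    tool_int_dom (by fun_prop) (hP.hSS t) 1 (fun x => by
      rw [abs_of_nonneg (mul_nonneg (hχ.q0 x) (sq_nonneg _))]
      have h1 := SS_ge n u φ nx ux px t x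
      nlinarith [hχ.q0 x, hχ.q1 x, sq_nonneg (φ t x), sq_nonneg (px t x), sq_nonneg (n t x),
        sq_nonneg (u t x)])
  have Ft : s0 / 2 * (∫ x, χ1 x * φ t x ^ 2) ≤ σ * ∫ x, χ1 x * PE φ px t x := by
    rw [← integral_const_mul, ← integral_const_mul]
    refine integral_mono (iφ.const_mul _) ((iP1 t).const_mul _) (fun x => ?_)
    have h1 : s0 / 2 * φ t x ^ 2 ≤ σ * PE φ px t x := by
      have := P2 t x
      unfold PE
      nlinarith [sq_nonneg (px t x)]
    have := mul_le_mul_of_nonneg_left h1 (hχ.q0 x)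
    simp only
    linarith
  have Ft2 := mul_le_mul_of_nonneg_left Ft hh.le
  have fin : (∫ x, χ1 x * EE W n u φ px t x) =
      (∫ x, χ1 x * HD W n u t x) + ∫ x, χ1 x * PE φ px t x := by
    rw [← integral_add (iH1 t) (iP1 t)]
    congr 1; funext x; unfold EE; ring
  rw [split, A1, fin]
  rw [C1'] at B1
  linarith

end Pack



/-- the moving cut-off -/
def psi (η z : ℝ) : ℝ := sigmoid (η * z)

def psi1 (η z : ℝ) : ℝ := η * (psi η z * (1 - psi η z))

def psi2 (η z : ℝ) : ℝ := η * (psi1 η z * (1 - 2 * psi η z))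

lemma psi_pos (η z : ℝ) : 0 < psi η z := sigmoid_pos _

lemma psi_lt (η z : ℝ) : psi η z < 1 := sigmoid_lt_one _

lemma psi_d (η z : ℝ) : HasDerivAt (psi η) (psi1 η z) z := by
  have h := (hasDerivAt_sigmoid (η * z)).comp z ((hasDerivAt_id z).const_mul η)
  exact h.congr_deriv (by simp [psi1, psi]; ring)

lemma psi_d1 (η z : ℝ) : HasDerivAt (psi1 η) (psi2 η z) z := by
  have h := ((psi_d η z).mul ((psi_d η z).const_sub 1)).const_mul η
  exact h.congr_deriv (by simp only [psi2]; ring)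

lemma psi_cont (η : ℝ) : Continuous (psi η) :=
  continuous_iff_continuousAt.2 (fun x => (psi_d η x).continuousAt)

lemma psi1_cont (η : ℝ) : Continuous (psi1 η) :=
  continuous_iff_continuousAt.2 (fun x => (psi_d1 η x).continuousAt)

lemma psi1_nonneg {η : ℝ} (h : 0 ≤ η) (z : ℝ) : 0 ≤ psi1 η z :=
  mul_nonneg h (mul_nonneg (psi_pos η z).le (by linarith [psi_lt η z]))

lemma psi1_le {η : ℝ} (h : 0 ≤ η) (z : ℝ) : psi1 η z ≤ η * psi η z := by
  unfold psi1
  refine mul_le_mul_of_nonneg_left ?_ h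
  nlinarith [psi_pos η z, psi_lt η z]

lemma psi1_le' {η : ℝ} (h : 0 ≤ η) (z : ℝ) : psi1 η z ≤ η * (1 - psi η z) := by
  unfold psi1
  refine mul_le_mul_of_nonneg_left ?_ h
  nlinarith [psi_pos η z, psi_lt η z]

lemma psi1_le_one {η : ℝ} (h : 0 ≤ η) (h1 : η ≤ 1) (z : ℝ) : psi1 η z ≤ 1 := by
  have := psi1_le h z
  nlinarith [psi_pos η z, psi_lt η z]

lemma psi2_abs {η : ℝ} (h : 0 ≤ η) (z : ℝ) : |psi2 η z| ≤ η * psi1 η z := by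
  unfold psi2
  rw [abs_mul, abs_of_nonneg h, abs_mul, abs_of_nonneg (psi1_nonneg h z)]
  refine mul_le_mul_of_nonneg_left ?_ h
  have : |1 - 2 * psi η z| ≤ 1 := by
    rw [abs_le]; constructor <;> linarith [psi_pos η z, psi_lt η z]
  nlinarith [psi1_nonneg h z]

lemma psi_weight {η : ℝ} (h : 0 ≤ η) (h1 : η ≤ 1) (a : ℝ) :
    Weight (fun x => psi η (x - a)) (fun x => psi1 η (x - a)) (fun x => psi2 η (x - a)) η where
  h1 := fun x => (psi_d η (x - a)).comp_sub_const x a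
  h2 := fun x => (psi_d1 η (x - a)).comp_sub_const x a
  c2 := by
    have h1 := psi_cont η
    have h2 := psi1_cont η
    unfold psi2
    fun_prop
  p0 := fun x => (psi_pos _ _).le
  p1 := fun x => (psi_lt _ _).le
  q0 := fun x => psi1_nonneg h _
  q1 := fun x => psi1_le_one h h1 _
  r := fun x => psi2_abs h _

lemma psi_taylor {η : ℝ} (h : 0 ≤ η) (h1 : η ≤ 1) (z r : ℝ) (hr : 0 ≤ r) :
    psi η (z - r) ≤ psi η z - r * psi1 η z + r ^ 2 := by
  have b2 : ∀ y, |psi2 η y| ≤ 1 := fun y => (psi2_abs h y).trans (by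
    nlinarith [psi1_nonneg h y, psi1_le_one h h1 y])
  have e1 : ∀ y, y ≤ z → psi1 η z - (z - y) ≤ psi1 η y := by
    intro y hy
    have := tool_mono (g := fun x => -psi1 η x) (c := -1) (fun x => (psi_d1 η x).neg) hy
      (fun x _ _ => by have := (abs_le.1 (b2 x)).2; linarith)
    linarith
  have := tool_mono (g := psi η) (c := psi1 η z - r) (fun x => psi_d η x)
    (by linarith : z - r ≤ z)
    (fun x hx hx' => by have := e1 x hx'.le; linarith)
  nlinarith

lemma psi_mono {η : ℝ} (h : 0 ≤ η) {a b : ℝ} (hab : a ≤ b) : psi η a ≤ psi η b := by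
  have := tool_mono (g := psi η) (c := 0) (fun x => psi_d η x) hab
    (fun x _ _ => psi1_nonneg h x)
  linarith

namespace Pack

variable {w wd W : ℝ → ℝ} {n u φ nt nx ut ux px : ℝ → ℝ → ℝ} {M : ℝ}

def VV (W : ℝ → ℝ) (n u φ px : ℝ → ℝ → ℝ) (η σ t : ℝ) : ℝ :=
  ∫ x, psi η (x - σ * t) * EE W n u φ px t x

lemma iEE1 (hP : Pack w wd W n u φ nt nx ut ux px M) (t : ℝ) : Integrable (EE W n u φ px t) := by
  have := hP.iEE (χ := fun _ => 1) continuous_const (by simp) t (hP.cEE t) (hP.EE_nonneg t)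
    (fun x => le_refl _)
  simpa using this

lemma bEE (hP : Pack w wd W n u φ nt nx ut ux px M) (t : ℝ) :
    ∫ x, EE W n u φ px t x ≤ 3 * M * M := by
  have h := integral_mono (hP.iEE1 t) ((hP.hSS t).const_mul (3 * M)) (hP.EE_le t)
  rw [integral_const_mul] at h
  exact h.trans (mul_le_mul_of_nonneg_left (hP.bSS t) (by linarith [hP.M1]))

lemma VV_antitone (hP : Pack w wd W n u φ nt nx ut ux px M) {η s0 σ : ℝ}
    (h0 : 0 ≤ η) (hη : η < 1) (hs0 : 0 < s0) (hσ : 0 < σ)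
    (P1 : ∀ t x, J n u t x * BB w n u t x + 1 / (2 * s0 * (1 - η)) * J n u t x ^ 2
      ≤ σ * HD W n u t x)
    (P2 : ∀ t x, s0 / 2 * φ t x ^ 2 ≤ σ * Rex (φ t x)) :
    ∀ s t, s < t → VV W n u φ px η σ t ≤ VV W n u φ px η σ s := by
  refine tool_antitone (C := (10 * σ * M ^ 3 + 3 * M) + σ ^ 2 * (3 * M * M)) ?_
  intro s t hst
  have hW := psi_weight h0 hη.le (σ * s)
  have hW' := psi_weight h0 hη.le (σ * t)
  have cb := hP.combine h0 hη hs0 hσ hW P1 P2 hst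
  have b0 : ∀ a x, |psi η (x - a)| ≤ 1 := fun a x => by
    rw [abs_of_nonneg (psi_pos _ _).le]; exact (psi_lt _ _).le
  have b1 : ∀ x, |psi1 η (x - σ * s)| ≤ 1 := fun x => by
    rw [abs_of_nonneg (psi1_nonneg h0 _)]; exact psi1_le_one h0 hη.le _
  have c0 := psi_cont η
  have c1 := psi1_cont η
  have iV : ∀ a r, Integrable (fun x => psi η (x - a) * EE W n u φ px r x) := fun a r =>
    hP.iEE (by fun_prop) (b0 a) r (hP.cEE r) (hP.EE_nonneg r) (fun x => le_refl _)
  have iV1 : Integrable (fun x => psi1 η (x - σ * s) * EE W n u φ px t x) :=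
    hP.iEE (by fun_prop) b1 t (hP.cEE t) (hP.EE_nonneg t) (fun x => le_refl _)
  have e1 : (∫ x, psi η (x - σ * s) * (EE W n u φ px t x - EE W n u φ px s x)) =
      (∫ x, psi η (x - σ * s) * EE W n u φ px t x) - VV W n u φ px η σ s := by
    unfold VV
    rw [← integral_sub (iV _ _) (iV _ _)]
    congr 1; funext x; ring
  have j1 : Integrable (fun x => psi η (x - σ * s) * EE W n u φ px t x -
      σ * (t - s) * (psi1 η (x - σ * s) * EE W n u φ px t x)) := (iV _ _).sub (iV1.const_mul _)
  have e2 : VV W n u φ px η σ t ≤ ∫ x, ((psi η (x - σ * s) * EE W n u φ px t x -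
      σ * (t - s) * (psi1 η (x - σ * s) * EE W n u φ px t x)) +
      (σ * (t - s)) ^ 2 * EE W n u φ px t x) := by
    refine integral_mono (iV _ _) (j1.add ((hP.iEE1 t).const_mul _)) (fun x => ?_)
    have h := psi_taylor h0 hη.le (x - σ * s) (σ * (t - s)) (by
      exact mul_nonneg hσ.le (by linarith))
    have e : x - σ * s - σ * (t - s) = x - σ * t := by ring
    rw [e] at h
    have := mul_le_mul_of_nonneg_right h (hP.EE_nonneg t x)
    simp only
    linarith
  rw [integral_add j1 ((hP.iEE1 t).const_mul _), integral_sub (iV _ _) (iV1.const_mul _),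
    integral_const_mul, integral_const_mul] at e2
  have e3 := mul_le_mul_of_nonneg_left (hP.bEE t) (sq_nonneg (σ * (t - s)))
  rw [e1] at cb
  nlinarith

lemma wbound (hP : Pack w wd W n u φ nt nx ut ux px M) {χ χ1 : ℝ → ℝ}
    (hχ : ∀ x, HasDerivAt χ (χ1 x) x) (cχ1 : Continuous χ1) (h0 : ∀ x, 0 ≤ χ x)
    (h1 : ∀ x, χ x ≤ 1) (hb : ∀ x, |χ1 x| ≤ 1/2 * χ x) (t : ℝ) :
    Integrable (fun x => χ x * (n t x ^ 2 + u t x ^ 2)) ∧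
    (∫ x, χ x * EE W n u φ px t x) ≤ (M + 16) * ∫ x, χ x * (n t x ^ 2 + u t x ^ 2) := by
  have c0 : Continuous χ := continuous_iff_continuousAt.2 (fun x => (hχ x).continuousAt)
  have cn := cslice hP.cn t
  have cu := cslice hP.cu t
  have cp := cslice hP.cpx t
  have cf := hP.cφ t
  have b0 : ∀ x, |χ x| ≤ 1 := fun x => by rw [abs_of_nonneg (h0 x)]; exact h1 x
  have dom : ∀ f : ℝ → ℝ, Continuous f → (∀ x, 0 ≤ f x) →
      (∀ x, f x ≤ SS n u φ nx ux px t x) →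
      Integrable f ∧ Integrable (fun x => χ x * f x) := by
    intro f cf f0 f1
    constructor
    · exact tool_int_dom cf (hP.hSS t) 1 (fun x => by rw [abs_of_nonneg (f0 x), one_mul]; exact f1 x)
    · refine tool_int_dom (by fun_prop) (hP.hSS t) 1 (fun x => ?_)
      rw [abs_of_nonneg (mul_nonneg (h0 x) (f0 x))]
      nlinarith [f0 x, f1 x, h0 x, h1 x]
  have sg := SS_ge n u φ nx ux px t
  have i1 := dom (fun x => n t x ^ 2) (by fun_prop) (fun x => sq_nonneg _) (fun x => by
    linarith [sg x, sq_nonneg (u t x), sq_nonneg (φ t x), sq_nonneg (px t x)])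
  have i2 := dom (fun x => n t x ^ 2 + u t x ^ 2) (by fun_prop) (fun x => by positivity)
    (fun x => by linarith [sg x, sq_nonneg (φ t x), sq_nonneg (px t x)])
  have i3 := dom (fun x => φ t x ^ 2 + px t x ^ 2) (by fun_prop) (fun x => by positivity)
    (fun x => by linarith [sg x, sq_nonneg (n t x), sq_nonneg (u t x)])
  have i4 := dom (fun x => px t x ^ 2 / 2 + φ t x ^ 2 / 4) (by fun_prop) (fun x => by positivity)
    (fun x => by
      linarith [sg x, sq_nonneg (n t x), sq_nonneg (u t x), sq_nonneg (φ t x),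
        sq_nonneg (px t x)])
  refine ⟨i2.2, ?_⟩
  have pw := phi_weighted (fun x => hP.hpx t x) (fun x => hP.hpxx t x) cn (fun x => hP.bφ t x)
    i1.1 i3.1 hχ cχ1 h0 h1 hb
  have a1 : (∫ x, χ x * EE W n u φ px t x) ≤ ∫ x, (M * (χ x * (n t x ^ 2 + u t x ^ 2)) +
      8 * (χ x * (px t x ^ 2 / 2 + φ t x ^ 2 / 4))) := by
    refine integral_mono (hP.iEE c0 b0 t (hP.cEE t) (hP.EE_nonneg t) (fun x => le_refl _))
      ((i2.2.const_mul _).add (i4.2.const_mul _)) (fun x => ?_)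
    have e1 := hP.HD_le t x
    have e2 := Rex_le (hP.bφ t x)
    have e3 : EE W n u φ px t x ≤ M * (n t x ^ 2 + u t x ^ 2) +
        8 * (px t x ^ 2 / 2 + φ t x ^ 2 / 4) := by
      unfold EE PE
      linarith [sq_nonneg (px t x)]
    have := mul_le_mul_of_nonneg_left e3 (h0 x)
    simp only
    linarith
  rw [integral_add (i2.2.const_mul _) (i4.2.const_mul _), integral_const_mul,
    integral_const_mul] at a1
  have a2 : (∫ x, χ x * n t x ^ 2) ≤ ∫ x, χ x * (n t x ^ 2 + u t x ^ 2) :=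
    integral_mono i1.2 i2.2 (fun x => mul_le_mul_of_nonneg_left
      (by linarith [sq_nonneg (u t x)]) (h0 x))
  linarith

lemma tight (hP : Pack w wd W n u φ nt nx ut ux px M) {χ : ℝ → ℝ} (cχ : Continuous χ)
    (h0 : ∀ x, 0 ≤ χ x) (h1 : ∀ x, χ x ≤ 1) {t R Y e κ : ℝ} (hκ : 0 ≤ κ)
    (hR : (∫ x in {x : ℝ | R < |x - Y|}, (n t x ^ 2 + u t x ^ 2)) < e)
    (hx : ∀ x, |x - Y| ≤ R → χ x ≤ κ) :
    (∫ x, χ x * (n t x ^ 2 + u t x ^ 2)) ≤ e + κ * M := by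
  have cn := cslice hP.cn t
  have cu := cslice hP.cu t
  have sg := SS_ge n u φ nx ux px t
  have i1 : Integrable (fun x => n t x ^ 2 + u t x ^ 2) :=
    tool_int_dom (by fun_prop) (hP.hSS t) 1 (fun x => by
      rw [abs_of_nonneg (by positivity)]
      linarith [sg x, sq_nonneg (φ t x), sq_nonneg (px t x)])
  have i2 : Integrable (fun x => χ x * (n t x ^ 2 + u t x ^ 2)) :=
    tool_int_dom (by fun_prop) i1 1 (fun x => by
      have : 0 ≤ n t x ^ 2 + u t x ^ 2 := by positivity
      rw [abs_of_nonneg (mul_nonneg (h0 x) this)]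
      exact mul_le_mul_of_nonneg_right (h1 x) this)
  have ms : MeasurableSet {x : ℝ | R < |x - Y|} :=
    (isOpen_lt continuous_const (by fun_prop)).measurableSet
  have i3 : Integrable (Set.indicator {x : ℝ | R < |x - Y|} (fun x => n t x ^ 2 + u t x ^ 2)) :=
    i1.indicator ms
  have a : (∫ x, χ x * (n t x ^ 2 + u t x ^ 2)) ≤
      ∫ x, (Set.indicator {x : ℝ | R < |x - Y|} (fun x => n t x ^ 2 + u t x ^ 2) x +
        κ * (n t x ^ 2 + u t x ^ 2)) := by
    refine integral_mono i2 (i3.add (i1.const_mul κ)) (fun x => ?_)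
    have p : 0 ≤ n t x ^ 2 + u t x ^ 2 := by positivity
    by_cases hc : R < |x - Y|
    · simp only [Set.indicator, Set.mem_ofPred_eq, hc, if_true]
      nlinarith [h1 x, mul_nonneg hκ p]
    · simp only [Set.indicator, Set.mem_ofPred_eq, hc, if_false, zero_add]
      exact mul_le_mul_of_nonneg_right (hx x (not_lt.1 hc)) p
  rw [integral_add i3 (i1.const_mul κ), integral_indicator ms, integral_const_mul] at a
  have b : (∫ x, (n t x ^ 2 + u t x ^ 2)) ≤ M := by
    refine le_trans (integral_mono i1 (hP.hSS t) (fun x => ?_)) (hP.bSS t)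
    linarith [sg x, sq_nonneg (φ t x), sq_nonneg (px t x)]
  have := mul_le_mul_of_nonneg_left b hκ
  linarith

end Pack



lemma psi_small {η : ℝ} (h : 0 < η) {e : ℝ} (he : 0 < e) :
    ∃ A, ∀ z, z ≤ A → psi η z ≤ e := by
  have h1 : Filter.Tendsto (fun z => psi η z) Filter.atBot (nhds 0) :=
    tendsto_sigmoid_atBot.comp (Filter.tendsto_id.const_mul_atBot h)
  have h2 := (h1.eventually (gt_mem_nhds he))
  obtain ⟨A, hA⟩ := Filter.eventually_atBot.1 h2
  exact ⟨A, fun z hz => (hA z hz).le⟩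

lemma psi_neg (η z : ℝ) : psi η (-z) = 1 - psi η z := by
  unfold psi
  rw [mul_neg, sigmoid_neg]

namespace Pack

variable {w wd W : ℝ → ℝ} {n u φ nt nx ut ux px : ℝ → ℝ → ℝ} {M : ℝ}

lemma vanish (hP : Pack w wd W n u φ nt nx ut ux px M) {η s0 σ : ℝ}
    (h0 : 0 < η) (hη : η ≤ 1/2) (hs0 : 0 < s0) (hσ : 0 < σ)
    (P1 : ∀ t x, J n u t x * BB w n u t x + 1 / (2 * s0 * (1 - η)) * J n u t x ^ 2
      ≤ σ * HD W n u t x)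
    (P2 : ∀ t x, s0 / 2 * φ t x ^ 2 ≤ σ * Rex (φ t x)) {y : ℝ → ℝ}
    (hcons : ∀ t1 t2, ∫ x, EE W n u φ px t1 x = ∫ x, EE W n u φ px t2 x)
    (hcpt : ∀ ε : ℝ, 0 < ε → ∃ R : ℝ, 0 < R ∧
      ∀ t : ℝ, (∫ x in {x : ℝ | R < |x - y t|}, (n t x ^ 2 + u t x ^ 2)) < ε)
    (y1 : ∀ A, ∃ t, 0 < t ∧ A ≤ y t - σ * t) (y2 : ∀ A, ∃ t, t < 0 ∧ y t - σ * t ≤ A) :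
    ∀ t x, EE W n u φ px t x = 0 := by
  have anti := hP.VV_antitone h0.le (by linarith) hs0 hσ P1 P2
  have hM := hP.M1
  have c0 := psi_cont η
  have c1 := psi1_cont η
  have small : ∀ e, 0 < e → ∫ x, EE W n u φ px 0 x ≤ 2 * ((M + 16) * (e + e * M)) := by
    intro e he
    obtain ⟨R, hR, hR2⟩ := hcpt e he
    obtain ⟨A, hA⟩ := psi_small h0 he
    obtain ⟨T, hT, hTy⟩ := y1 (R - A)
    obtain ⟨S, hS, hSy⟩ := y2 (A - R)
    have v1 : VV W n u φ px η σ S ≤ (M + 16) * (e + e * M) := by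
      obtain ⟨-, b⟩ := hP.wbound (χ := fun x => psi η (x - σ * S))
        (χ1 := fun x => psi1 η (x - σ * S))
        (fun x => (psi_d η (x - σ * S)).comp_sub_const x _) (by fun_prop)
        (fun x => (psi_pos _ _).le) (fun x => (psi_lt _ _).le) (fun x => by
          rw [abs_of_nonneg (psi1_nonneg h0.le _)]
          refine (psi1_le h0.le _).trans (mul_le_mul_of_nonneg_right hη (psi_pos _ _).le)) S
      refine b.trans (mul_le_mul_of_nonneg_left ?_ (by linarith))
      refine hP.tight (χ := fun x => psi η (x - σ * S)) (by fun_prop)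
        (fun x => (psi_pos _ _).le) (fun x => (psi_lt _ _).le) he.le (hR2 S) (fun x hx => ?_)
      have := (abs_le.1 hx).2
      exact hA _ (by linarith)
    have v2 : (∫ x, EE W n u φ px T x) - VV W n u φ px η σ T ≤ (M + 16) * (e + e * M) := by
      have b0 : ∀ x, |psi η (x - σ * T)| ≤ 1 := fun x => by
        rw [abs_of_nonneg (psi_pos _ _).le]; exact (psi_lt _ _).le
      have iV : Integrable (fun x => psi η (x - σ * T) * EE W n u φ px T x) :=
        hP.iEE (by fun_prop) b0 T (hP.cEE T) (hP.EE_nonneg T) (fun x => le_refl _)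
      unfold VV
      rw [← integral_sub (hP.iEE1 T) iV]
      have e1 : (fun x => EE W n u φ px T x - psi η (x - σ * T) * EE W n u φ px T x) =
        fun x => (1 - psi η (x - σ * T)) * EE W n u φ px T x := by funext x; ring
      rw [e1]
      obtain ⟨-, b⟩ := hP.wbound (χ := fun x => 1 - psi η (x - σ * T))
        (χ1 := fun x => -psi1 η (x - σ * T))
        (fun x => ((psi_d η (x - σ * T)).comp_sub_const x _).const_sub 1) (by fun_prop)
        (fun x => by linarith [psi_lt η (x - σ * T)])
        (fun x => by linarith [psi_pos η (x - σ * T)]) (fun x => by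
          rw [abs_neg, abs_of_nonneg (psi1_nonneg h0.le _)]
          refine (psi1_le' h0.le _).trans (mul_le_mul_of_nonneg_right hη
            (by linarith [psi_lt η (x - σ * T)]))) T
      refine b.trans (mul_le_mul_of_nonneg_left ?_ (by linarith))
      refine hP.tight (χ := fun x => 1 - psi η (x - σ * T)) (by fun_prop)
        (fun x => by linarith [psi_lt η (x - σ * T)])
        (fun x => by linarith [psi_pos η (x - σ * T)]) he.le (hR2 T) (fun x hx => ?_)
      have := (abs_le.1 hx).1
      rw [← psi_neg]
      exact hA _ (by linarith)
    have v3 := anti S T (by linarith)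
    rw [hcons 0 T]
    linarith
  have E0 : ∫ x, EE W n u φ px 0 x ≤ 0 := by
    by_contra hc
    push Not at hc
    set E := ∫ x, EE W n u φ px 0 x
    have hq : 0 < 4 * ((M + 16) * (1 + M)) := by positivity
    have := small (E / (4 * ((M + 16) * (1 + M)))) (div_pos hc hq)
    have e : 2 * ((M + 16) * (E / (4 * ((M + 16) * (1 + M))) +
      E / (4 * ((M + 16) * (1 + M))) * M)) = E / 2 := by
      have : (1 + M) ≠ 0 := by positivity
      have : (M + 16) ≠ 0 := by positivity
      field_simp
      ring
    linarith
  intro t x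
  have Et : ∫ x, EE W n u φ px t x = 0 := by
    rw [hcons t 0]
    exact le_antisymm E0 (integral_nonneg (hP.EE_nonneg 0))
  have h2 := (integral_eq_zero_iff_of_nonneg (hP.EE_nonneg t) (hP.iEE1 t)).1 Et
  have h3 := Continuous.ae_eq_iff_eq (μ := volume) (hP.cEE t) continuous_const |>.1 h2
  exact congrFun h3 x

lemma vanish_nu (hP : Pack w wd W n u φ nt nx ut ux px M) {c s0 : ℝ} (hc : 0 < c) (hs : 0 < s0)
    {σ : ℝ} (hσ : 0 < σ) (hWc : ∀ t x, c * n t x ^ 2 ≤ W (n t x))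
    (P2 : ∀ t x, s0 / 2 * φ t x ^ 2 ≤ σ * Rex (φ t x))
    (h : ∀ t x, EE W n u φ px t x = 0) : ∀ t x, n t x = 0 ∧ u t x = 0 ∧ φ t x = 0 := by
  intro t x
  have e := h t x
  have b := abs_le.1 (hP.bn t x)
  have r := Rex_nonneg (φ t x)
  have w0 := hWc t x
  have q := P2 t x
  unfold EE HD PE at e
  have p1 : 0 ≤ (1/2) * (1 + n t x) * u t x ^ 2 :=
    mul_nonneg (by linarith) (sq_nonneg _)
  have p2 : 0 ≤ c * n t x ^ 2 := by positivity
  have p3 : 0 ≤ (1/2) * px t x ^ 2 := by positivity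
  have z1 : n t x ^ 2 = 0 := by
    have : c * n t x ^ 2 = 0 := by linarith
    rcases mul_eq_zero.1 this with h | h
    · linarith
    · exact h
  have z2 : (1/2) * (1 + n t x) * u t x ^ 2 = 0 := by linarith
  have z3 : Rex (φ t x) = 0 := by linarith
  rw [z3, mul_zero] at q
  have n0 : n t x = 0 := by simpa using z1
  refine ⟨n0, ?_, ?_⟩
  · rw [n0] at z2
    have : u t x ^ 2 = 0 := by linarith
    simpa using this
  · have : φ t x ^ 2 = 0 := by
      have h1 : 0 ≤ φ t x ^ 2 := sq_nonneg _
      nlinarith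
    simpa using this

end Pack



lemma params {k ε : ℝ} (hk : 0 < k) (hε : 0 < ε) : ∃ θ : ℝ, 0 < θ ∧ θ ≤ 1/2 ∧ θ < k ∧
    0 < (√(1 + k) + ε) - θ - (1 + θ) / (√(1 + k) * (1 - θ)) ∧
    (k + θ) ^ 2 ≤ ((√(1 + k) + ε) - θ - (1 + θ) / (√(1 + k) * (1 - θ))) *
      ((√(1 + k) + ε) * (k - θ) / (1 + θ)) ∧
    √(1 + k) ≤ (√(1 + k) + ε) * (1 - 4 * θ) := by
  set s0 := √(1 + k) with hs
  have s0p : 0 < s0 := Real.sqrt_pos.2 (by linarith)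
  have s0sq : s0 ^ 2 = 1 + k := Real.sq_sqrt (by linarith)
  set σ := s0 + ε with hσ
  have σp : 0 < σ := by positivity
  have s01 : 1 < s0 := by nlinarith
  have a0 : k / s0 < σ - 1 / s0 := by
    have : σ - 1 / s0 = (σ * s0 - 1) / s0 := by field_simp
    rw [this]
    apply div_lt_div_of_pos_right _ s0p
    nlinarith
  have a0p : 0 < σ - 1 / s0 := lt_trans (by positivity) a0
  have cA : ContinuousAt (fun θ : ℝ => σ - θ - (1 + θ) / (s0 * (1 - θ))) 0 := by
    refine ContinuousAt.sub (by fun_prop) (ContinuousAt.div (by fun_prop) (by fun_prop) ?_)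
    simp; exact s0p.ne'
  have cF : ContinuousAt (fun θ : ℝ => (σ - θ - (1 + θ) / (s0 * (1 - θ))) *
      (σ * (k - θ) / (1 + θ)) - (k + θ) ^ 2) 0 := by
    refine ContinuousAt.sub (cA.mul (ContinuousAt.div (by fun_prop) (by fun_prop) ?_))
      (by fun_prop)
    norm_num
  have cG : ContinuousAt (fun θ : ℝ => σ * (1 - 4 * θ) - s0) 0 := by fun_prop
  have pA : 0 < (fun θ : ℝ => σ - θ - (1 + θ) / (s0 * (1 - θ))) 0 := by simpa using a0p
  have pF : 0 < (fun θ : ℝ => (σ - θ - (1 + θ) / (s0 * (1 - θ))) *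
      (σ * (k - θ) / (1 + θ)) - (k + θ) ^ 2) 0 := by
    simp only [sub_zero, add_zero, mul_one, div_one]
    have h1 : k / s0 * (σ * k) < (σ - 1 / s0) * (σ * k) :=
      mul_lt_mul_of_pos_right a0 (by positivity)
    have h2 : k / s0 * (σ * k) = k ^ 2 * (σ / s0) := by field_simp
    have h3 : 1 ≤ σ / s0 := by rw [le_div_iff₀ s0p]; linarith
    nlinarith [sq_nonneg k]
  have pG : 0 < (fun θ : ℝ => σ * (1 - 4 * θ) - s0) 0 := by simp [hσ, hε]
  have ev1 := cA.eventually (lt_mem_nhds pA)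
  have ev2 := cF.eventually (lt_mem_nhds pF)
  have ev3 := cG.eventually (lt_mem_nhds pG)
  obtain ⟨r, hr, hb⟩ := Metric.eventually_nhds_iff.1 (ev1.and (ev2.and ev3))
  have hm : 0 < min (r / 2) (min (1/2) (k / 2)) := by positivity
  have m1 := min_le_left (r / 2) (min (1/2) (k / 2))
  have m2 := (min_le_right (r / 2) (min (1/2) (k / 2))).trans (min_le_left _ _)
  have m3 := (min_le_right (r / 2) (min (1/2) (k / 2))).trans (min_le_right _ _)
  set θ := min (r / 2) (min (1/2) (k / 2))
  have := hb (y := θ) (by rw [Real.dist_eq, sub_zero, abs_of_pos hm]; linarith)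
  exact ⟨θ, hm, m2, by linarith, this.1, by linarith [this.2.1], by linarith [this.2.2]⟩

lemma pointwise_P1 {k θ s0 σ n u wn Wn : ℝ} (hθ : 0 < θ) (hθ2 : θ ≤ 1/2)
    (hs0 : 0 < s0) (hσ : 0 < σ) (hk : θ < k)
    (hA : 0 < σ - θ - (1 + θ) / (s0 * (1 - θ)))
    (hF : (k + θ) ^ 2 ≤ (σ - θ - (1 + θ) / (s0 * (1 - θ))) * (σ * (k - θ) / (1 + θ)))
    (bn : |n| ≤ θ) (bu : |u| ≤ θ) (bw : |wn| ≤ (k + θ) * |n|) (bW : (k - θ) / 2 * n ^ 2 ≤ Wn) :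
    (1 + n) * u * (u ^ 2 / 2 + wn) + 1 / (2 * s0 * (1 - θ)) * ((1 + n) * u) ^ 2 ≤
      σ * ((1/2) * (1 + n) * u ^ 2 + Wn) := by
  set A := σ - θ - (1 + θ) / (s0 * (1 - θ)) with hAdef
  set B := σ * (k - θ) / (1 + θ) with hB
  have n1 := abs_le.1 bn
  have u1 := abs_le.1 bu
  have ρp : 0 < 1 + n := by linarith
  have h1θ : 0 < 1 - θ := by linarith
  have q : 0 ≤ 1/2 * A * u ^ 2 + 1/2 * B * n ^ 2 - (k + θ) * (|u| * |n|) := by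
    have : 0 ≤ A * (1/2 * A * u ^ 2 + 1/2 * B * n ^ 2 - (k + θ) * (|u| * |n|)) := by
      have e1 : 0 ≤ (A * |u| - (k + θ) * |n|) ^ 2 := sq_nonneg _
      have e2 := mul_le_mul_of_nonneg_right hF (sq_nonneg n)
      have e3 := sq_abs u
      have e4 := sq_abs n
      have e5 : (A * |u| - (k + θ) * |n|) ^ 2 =
        A ^ 2 * |u| ^ 2 - 2 * A * (k + θ) * (|u| * |n|) + (k + θ) ^ 2 * |n| ^ 2 := by ring
      rw [e5, e3, e4] at e1
      linarith
    exact nonneg_of_mul_nonneg_right this hA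
  have q2 := mul_nonneg ρp.le q
  have f1 : (1 + n) * (u * wn) ≤ (1 + n) * ((k + θ) * (|u| * |n|)) := by
    refine mul_le_mul_of_nonneg_left ?_ ρp.le
    calc u * wn ≤ |u| * |wn| := by rw [← abs_mul]; exact le_abs_self _
      _ ≤ |u| * ((k + θ) * |n|) := mul_le_mul_of_nonneg_left bw (abs_nonneg _)
      _ = _ := by ring
  have f2 : (1 + n) * (1/2 * B * n ^ 2) ≤ σ * Wn := by
    have g1 := mul_le_mul_of_nonneg_left bW hσ.le
    have g2 : σ * ((k - θ) / 2 * n ^ 2) = (1 + θ) * (1/2 * B * n ^ 2) := by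
      rw [hB]; field_simp
    have g3 : 0 ≤ 1/2 * B * n ^ 2 := by
      have : 0 ≤ B := div_nonneg (mul_nonneg hσ.le (by linarith)) (by linarith)
      positivity
    have g4 : (1 + n) * (1/2 * B * n ^ 2) ≤ (1 + θ) * (1/2 * B * n ^ 2) :=
      mul_le_mul_of_nonneg_right (by linarith) g3
    linarith
  have f3 : (1 + n) * (1/2 * A * u ^ 2) ≤ (1 + n) * ((1/2) * (σ - u) * u ^ 2) -
      1 / (2 * s0 * (1 - θ)) * ((1 + n) * u) ^ 2 := by
    have g1 : 1 / (2 * s0 * (1 - θ)) * ((1 + n) * u) ^ 2 =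
      (1 + n) * ((1/2) * ((1 + n) / (s0 * (1 - θ))) * u ^ 2) := by field_simp
    rw [g1, ← mul_sub]
    refine mul_le_mul_of_nonneg_left ?_ ρp.le
    have g2 : (1 + n) / (s0 * (1 - θ)) ≤ (1 + θ) / (s0 * (1 - θ)) :=
      div_le_div_of_nonneg_right (by linarith) (by positivity)
    have g3 : A ≤ σ - u - (1 + n) / (s0 * (1 - θ)) := by linarith
    have g4 := mul_le_mul_of_nonneg_right g3 (sq_nonneg u)
    linarith
  linarith

lemma pointwise_P2 {s0 σ θ a : ℝ} (hσ : 0 < σ) (hθ : 0 < θ) (ha : |a| ≤ 2 * θ) (ha2 : |a| ≤ 1/2)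
    (hs : s0 ≤ σ * (1 - 4 * θ)) : s0 / 2 * a ^ 2 ≤ σ * Rex a := by
  have hR : |Rex a - 1 * a ^ 2 / 2| ≤ (4 * θ) / 2 * a ^ 2 := by
    refine tool_taylor (g := fun x => x * exp x) (d := min (2 * θ) (1/2)) (by simp [Rex])
      (fun x _ => ?_) (fun x hx => ?_) a (le_min ha ha2)
    · exact (((hasDerivAt_id x).mul (hasDerivAt_exp x)).sub (hasDerivAt_exp x)).add_const 1
        |>.congr_deriv (by simp)
    · have h1 := tool_exp_upper (hx.trans (min_le_right _ _)) (b := 0) (by norm_num)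
      rw [exp_zero, sub_zero] at h1
      have e : x * exp x - 1 * x = x * (exp x - 1) := by ring
      rw [e, abs_mul, mul_comm]
      refine mul_le_mul_of_nonneg_right ?_ (abs_nonneg _)
      linarith [hx.trans (min_le_left _ _)]
  have h1 := (abs_le.1 hR).1
  have h2 : (1 - 4 * θ) / 2 * a ^ 2 ≤ Rex a := by linarith
  have h3 := mul_le_mul_of_nonneg_left h2 hσ.le
  have h4 := mul_le_mul_of_nonneg_right hs (sq_nonneg a)
  linarith

def wdf (p : ℝ → ℝ) (a : ℝ) : ℝ := deriv p (1 + a) / (1 + a)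

lemma wdf_cont {p : ℝ → ℝ} (hp : IsPressure p) : ContinuousOn (wdf p) (Set.Ioi (-1)) := by
  have h1 : ContinuousOn (deriv p) (Set.Ioi 0) :=
    hp.smooth.continuousOn_deriv_of_isOpen isOpen_Ioi (by simp)
  refine ContinuousOn.div (h1.comp (by fun_prop) (fun x hx => ?_)) (by fun_prop) (fun x hx => ?_)
  · simp only [Set.mem_Ioi] at hx ⊢; linarith
  · simp only [Set.mem_Ioi] at hx; linarith

lemma wfacts {p w : ℝ → ℝ} (hp : IsPressure p) (hw : IsWFor p w) : ∃ M : ℝ, 1 ≤ M ∧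
    ∀ a, |a| ≤ 1/2 → HasDerivAt w (wdf p a) a ∧ HasDerivAt (Wfun w) (w a) a ∧
      |w a| ≤ M * |a| ∧ 0 ≤ Wfun w a ∧ Wfun w a ≤ M * a ^ 2 ∧ |wdf p a| ≤ M := by
  obtain ⟨w0, hd⟩ := hw
  have sub : Set.Icc (-(1/2):ℝ) (1/2) ⊆ Set.Ioi (-1) := fun x hx => by
    simp only [Set.mem_Ioi]; linarith [hx.1]
  obtain ⟨M0, hM0⟩ := isCompact_Icc.exists_bound_of_continuousOn ((wdf_cont hp).mono sub)
  refine ⟨max M0 1, le_max_right _ _, ?_⟩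
  have cw : ContinuousOn w (Set.Ioi (-1)) := fun x hx => (hd x hx).continuousAt.continuousWithinAt
  have mono : MonotoneOn w (Set.Ioi (-1)) := by
    refine monotoneOn_of_deriv_nonneg (convex_Ioi _) cw (fun x hx => ?_) (fun x hx => ?_)
    · rw [interior_Ioi] at hx; exact (hd x hx).differentiableAt.differentiableWithinAt
    · rw [interior_Ioi] at hx
      rw [(hd x hx).deriv]
      have : 0 < 1 + x := by simp only [Set.mem_Ioi] at hx; linarith
      exact div_nonneg (hp.deriv_pos _ this).le this.le
  have bwd : ∀ a, |a| ≤ 1/2 → |wdf p a| ≤ max M0 1 := fun a ha =>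
    (hM0 a (abs_le.1 ha)).trans (le_max_left _ _)
  have bw : ∀ a, |a| ≤ 1/2 → |w a| ≤ max M0 1 * |a| := by
    intro a ha
    have := (convex_Icc (-(1/2):ℝ) (1/2)).norm_image_sub_le_of_norm_hasDerivWithin_le
      (f := w) (f' := wdf p) (C := max M0 1) (x := 0) (y := a)
      (fun x hx => (hd x (sub hx)).hasDerivWithinAt)
      (fun x hx => bwd x (abs_le.2 hx)) (by norm_num) (abs_le.1 ha)
    simpa [w0] using this
  intro a ha
  have ha' := abs_le.1 ha
  have hseg : Set.uIcc 0 a ⊆ Set.Icc (-(1/2):ℝ) (1/2) :=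
    Set.uIcc_subset_Icc (by norm_num) ha'
  have ii : IntervalIntegrable w volume 0 a :=
    (cw.mono (hseg.trans sub)).intervalIntegrable
  refine ⟨hd a (sub ha'), ?_, bw a ha, ?_, ?_, bwd a ha⟩
  · exact intervalIntegral.integral_hasDerivAt_right ii
      (cw.stronglyMeasurableAtFilter isOpen_Ioi a (sub ha')) (hd a (sub ha')).continuousAt
  · unfold Wfun
    rcases le_total 0 a with h | h
    · refine intervalIntegral.integral_nonneg h (fun x hx => ?_)
      rw [← w0]
      exact mono (by simp) (by simp only [Set.mem_Ioi]; linarith [hx.1]) hx.1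
    · rw [intervalIntegral.integral_symm]
      have : 0 ≤ ∫ x in a..0, -w x := by
        refine intervalIntegral.integral_nonneg h (fun x hx => ?_)
        have := mono (a := x) (b := 0) (by simp only [Set.mem_Ioi]; linarith [hx.1, ha'.1])
          (by simp) hx.2
        rw [w0] at this
        linarith
      rw [intervalIntegral.integral_neg] at this
      exact this
  · unfold Wfun
    have h := intervalIntegral.norm_integral_le_of_norm_le_const (a := 0) (b := a) (f := w)
      (C := max M0 1 * |a|) (fun x hx => by
        have hx1 := hseg (Set.uIoc_subset_uIcc hx)
        refine (bw x (abs_le.2 hx1)).trans (mul_le_mul_of_nonneg_left ?_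
          (le_trans zero_le_one (le_max_right _ _)))
        rcases le_total 0 a with h | h
        · rw [Set.uIoc_of_le h] at hx
          rw [abs_of_nonneg hx.1.le, abs_of_nonneg h]; exact hx.2
        · rw [Set.uIoc_of_ge h] at hx
          rw [abs_of_nonpos hx.2, abs_of_nonpos h]; linarith [hx.1])
    rw [sub_zero, norm_eq_abs, mul_assoc, abs_mul_abs_self] at h
    have := le_abs_self (∫ s in (0:ℝ)..a, w s)
    nlinarith

lemma wlocal {p w : ℝ → ℝ} (hw : IsWFor p w) {k θ : ℝ} (hk : k = deriv p 1) (hθ : 0 < θ) :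
    ∃ d : ℝ, 0 < d ∧ ∀ a, |a| ≤ d → |w a - k * a| ≤ θ * |a| := by
  have h := hw.2 0 (by norm_num)
  rw [add_zero, div_one, ← hk, hasDerivAt_iff_isLittleO] at h
  have h2 := h.bound hθ
  obtain ⟨r, hr, hb⟩ := Metric.eventually_nhds_iff.1 h2
  refine ⟨r / 2, by positivity, fun a ha => ?_⟩
  have := hb (y := a) (by rw [Real.dist_eq, sub_zero]; linarith)
  simp only [hw.1, sub_zero, smul_eq_mul, norm_eq_abs] at this
  rwa [mul_comm k a]

lemma Rfun_eq (x : ℝ) : Rfun x = Rex x := by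
  unfold Rfun Rex qfun
  have : ∫ s in (0:ℝ)..x, (exp s - 1) = exp x - 1 - x := by
    rw [intervalIntegral.integral_sub (by simp) (by simp)]
    simp
  rw [this]; ring



lemma sq_of_eLp {f : ℝ → ℝ} (hf : Continuous f) (h : eLpNorm f 2 volume ^ 2 < ∞) :
    Integrable (fun x => f x ^ 2) ∧ ENNReal.ofReal (∫ x, f x ^ 2) = eLpNorm f 2 volume ^ 2 := by
  have h1 : eLpNorm f 2 volume < ∞ := by
    by_contra hc
    have : eLpNorm f 2 volume = ∞ := by simpa using hc
    simp [this] at h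
  have hm : MemLp f 2 volume := ⟨hf.aestronglyMeasurable, h1⟩
  have hi := hm.integrable_sq
  refine ⟨hi, ?_⟩
  rw [ofReal_integral_eq_lintegral_ofReal hi (Filter.Eventually.of_forall (fun x => sq_nonneg _))]
  have e := eLpNorm_nnreal_pow_eq_lintegral (μ := volume) (f := f) (p := 2) (by norm_num)
  simp only [NNReal.coe_ofNat, ENNReal.coe_ofNat] at e
  rw [← ENNReal.rpow_natCast]
  push_cast
  rw [e]
  refine lintegral_congr (fun x => ?_)
  rw [← ofReal_norm, ENNReal.ofReal_rpow_of_nonneg (norm_nonneg _) (by norm_num)]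
  simp

lemma H1_facts {f g : ℝ → ℝ} {d : ℝ} (hd : 0 < d) (hf : ∀ x, HasDerivAt f (g x) x)
    (hg : Continuous g) (h : H1norm f ≤ ENNReal.ofReal d) :
    Integrable (fun x => f x ^ 2) ∧ Integrable (fun x => g x ^ 2) ∧
      (∫ x, f x ^ 2) + (∫ x, g x ^ 2) ≤ d ^ 2 ∧ ∀ x, |f x| ≤ d := by
  have eg : deriv f = g := funext (fun x => (hf x).deriv)
  unfold H1norm at h
  rw [eg] at h
  have cf : Continuous f := continuous_iff_continuousAt.2 (fun x => (hf x).continuousAt)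
  have h2 : eLpNorm f 2 volume ^ 2 + eLpNorm g 2 volume ^ 2 ≤ ENNReal.ofReal (d ^ 2) := by
    have := pow_le_pow_left₀ (by simp) h 2
    rw [← ENNReal.ofReal_pow hd.le, ← ENNReal.rpow_natCast _ 2, ← ENNReal.rpow_mul] at this
    simpa using this
  have ht : eLpNorm f 2 volume ^ 2 + eLpNorm g 2 volume ^ 2 < ∞ :=
    h2.trans_lt ENNReal.ofReal_lt_top
  obtain ⟨i1, e1⟩ := sq_of_eLp cf (lt_of_le_of_lt le_self_add ht)
  obtain ⟨i2, e2⟩ := sq_of_eLp hg (lt_of_le_of_lt le_add_self ht)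
  have p1 : 0 ≤ ∫ x, f x ^ 2 := integral_nonneg (fun x => sq_nonneg _)
  have p2 : 0 ≤ ∫ x, g x ^ 2 := integral_nonneg (fun x => sq_nonneg _)
  rw [← e1, ← e2, ← ENNReal.ofReal_add p1 p2, ENNReal.ofReal_le_ofReal_iff (by positivity)] at h2
  refine ⟨i1, i2, h2, fun x => ?_⟩
  exact abs_le_of_sq_le_sq ((tool_sobolev hf hg i1 i2 x).trans h2) hd.le

lemma C1_joint {f : ℝ → ℝ → ℝ} (hf : ContDiff ℝ 1 (Function.uncurry f)) :
    ∃ ft fx : ℝ → ℝ → ℝ, Continuous (Function.uncurry ft) ∧ Continuous (Function.uncurry fx) ∧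
      (∀ t x, HasDerivAt (fun s => f s x) (ft t x) t) ∧ ∀ t x, HasDerivAt (f t) (fx t x) x := by
  have hc : Continuous (fderiv ℝ (Function.uncurry f)) := hf.continuous_fderiv (by norm_num)
  have hd : ∀ z, HasFDerivAt (Function.uncurry f) (fderiv ℝ (Function.uncurry f) z) z :=
    fun z => (hf.differentiable (by norm_num) z).hasFDerivAt
  refine ⟨fun t x => fderiv ℝ (Function.uncurry f) (t, x) (1, 0),
    fun t x => fderiv ℝ (Function.uncurry f) (t, x) (0, 1), ?_, ?_, fun t x => ?_, fun t x => ?_⟩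
  · exact hc.clm_apply continuous_const
  · exact hc.clm_apply continuous_const
  · exact (hd (t, x)).comp_hasDerivAt t ((hasDerivAt_id t).prodMk (hasDerivAt_const t x))
  · exact (hd (t, x)).comp_hasDerivAt x ((hasDerivAt_const x t).prodMk (hasDerivAt_id x))

lemma fast_pos {p w : ℝ → ℝ} (hp : IsPressure p) (hw : IsWFor p w)
    {k ε θ d : ℝ} (hk : 0 < k) (hε : 0 < ε) (hθ : 0 < θ) (hθ2 : θ ≤ 1/2) (hθk : θ < k)
    (hA : 0 < (√(1 + k) + ε) - θ - (1 + θ) / (√(1 + k) * (1 - θ)))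
    (hF : (k + θ) ^ 2 ≤ ((√(1 + k) + ε) - θ - (1 + θ) / (√(1 + k) * (1 - θ))) *
      ((√(1 + k) + ε) * (k - θ) / (1 + θ)))
    (hs : √(1 + k) ≤ (√(1 + k) + ε) * (1 - 4 * θ))
    (hd0 : 0 < d) (hd8 : d ≤ 1/8) (hdθ : d ≤ θ) (hdk : (k + θ) * d ≤ 1/2)
    (hloc : ∀ a, |a| ≤ d → |w a - k * a| ≤ θ * |a|)
    {n u φ : ℝ → ℝ → ℝ} {y : ℝ → ℝ} (hsol : IsEPwSolution w n u φ) (hy : ContDiff ℝ 1 y)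
    (hcpt : L2CompactWith n u y) (hcons : ConservesEnergy w n u φ)
    {c : ℝ} (hc : √(1 + k) + ε < c) (hyc : ∀ t, c ≤ deriv y t)
    (hn1 : ∀ t, H1norm (n t) ≤ ENNReal.ofReal d) (hu1 : ∀ t, H1norm (u t) ≤ ENNReal.ofReal d) :
    ∀ t x, n t x = 0 ∧ u t x = 0 ∧ φ t x = 0 := by
  obtain ⟨nt, nx, cnt, cnx, hnt, hnx⟩ := C1_joint hsol.reg_n
  obtain ⟨ut, ux, cut, cux, hut, hux⟩ := C1_joint hsol.reg_u
  obtain ⟨M0, hM0, wf⟩ := wfacts hp hw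
  have cn := hsol.reg_n.continuous
  have cu := hsol.reg_u.continuous
  have cn1 : ∀ t, Continuous (n t) := fun t => cn.comp (Continuous.prodMk_right t)
  have cu1 : ∀ t, Continuous (u t) := fun t => cu.comp (Continuous.prodMk_right t)
  have cnx1 : ∀ t, Continuous (nx t) := fun t => cnx.comp (Continuous.prodMk_right t)
  have cux1 : ∀ t, Continuous (ux t) := fun t => cux.comp (Continuous.prodMk_right t)
  have fn := fun t => H1_facts hd0 (hnx t) (cnx1 t) (hn1 t)
  have fu := fun t => H1_facts hd0 (hux t) (cux1 t) (hu1 t)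
  have bn : ∀ t x, |n t x| ≤ d := fun t => (fn t).2.2.2
  have bu : ∀ t x, |u t x| ≤ d := fun t => (fu t).2.2.2
  set px : ℝ → ℝ → ℝ := fun t => deriv (φ t) with hpxdef
  have hpx : ∀ t x, HasDerivAt (φ t) (px t x) x := fun t x =>
    ((hsol.reg_phi_space t).differentiable (by norm_num) x).hasDerivAt
  have hpxx : ∀ t x, HasDerivAt (px t) (exp (φ t x) - 1 - n t x) x := by
    intro t x
    have h1 : ContDiff ℝ 1 (deriv (φ t)) :=
      ((contDiff_succ_iff_deriv (n := 1)).1 (by simpa [one_add_one_eq_two] using hsol.reg_phi_space t)).2.2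
    have h2 := (h1.differentiable (by norm_num) x).hasDerivAt
    have h3 := hsol.eq_phi t x
    unfold qfun at h3
    exact h2.congr_deriv (by linarith)
  have eqn : ∀ t x, nt t x = -(nx t x * u t x + (1 + n t x) * ux t x) := by
    intro t x
    have h1 := hsol.eq_n t x
    rw [(hnt t x).deriv] at h1
    have h2 : HasDerivAt (fun z => (1 + n t z) * u t z) (nx t x * u t x + (1 + n t x) * ux t x) x :=
      ((hnx t x).const_add 1).mul (hux t x)
    rw [h1, h2.deriv]
  have hwn : ∀ t x, HasDerivAt (fun z => w (n t z)) (wdf p (n t x) * nx t x) x := fun t x =>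
    (hw.2 (n t x) (by linarith [hsol.dens_pos t x])).comp x (hnx t x)
  have hH : ∀ t x, HasDerivAt (fun z => u t z ^ 2 / 2 + w (n t z) + φ t z)
      (u t x * ux t x + wdf p (n t x) * nx t x + px t x) x := by
    intro t x
    exact (((((hux t x).pow 2).div_const 2).add (hwn t x)).add (hpx t x)).congr_deriv
      (by simp; ring)
  have equ : ∀ t x, ut t x = -(u t x * ux t x + wdf p (n t x) * nx t x + px t x) := by
    intro t x
    have h1 := hsol.eq_u t x
    rw [(hut t x).deriv] at h1
    rw [h1, (hH t x).deriv]
  have cpx : Continuous (Function.uncurry px) := by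
    have e : Function.uncurry px = fun z => -(Function.uncurry ut z) -
        Function.uncurry u z * Function.uncurry ux z -
        wdf p (Function.uncurry n z) * Function.uncurry nx z := by
      funext z
      have := equ z.1 z.2
      simp only [Function.uncurry_def]
      linarith
    rw [e]
    have cw : Continuous (fun z => wdf p (Function.uncurry n z)) :=
      (wdf_cont hp).comp_continuous cn (fun z => by
        have := hsol.dens_pos z.1 z.2
        simp only [Set.mem_Ioi, Function.uncurry_def]; linarith)
    exact (cut.neg.sub (cu.mul cux)).sub (cw.mul cnx)
  have bw : ∀ a, |a| ≤ d → |w a| ≤ (k + θ) * |a| := by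
    intro a ha
    have h1 := hloc a ha
    have h2 : |w a| ≤ |w a - k * a| + |k * a| := by
      have := abs_add_le (w a - k * a) (k * a)
      rwa [sub_add_cancel] at this
    rw [abs_mul, abs_of_pos hk] at h2
    linarith
  have bφ : ∀ t x, |φ t x| ≤ 2 * d := by
    refine phi_bound (u := u) (H := fun t z => u t z ^ 2 / 2 + w (n t z) + φ t z) hd0 hd8 cut cpx hut
      cu1 (fun t x => (hH t x).congr_deriv (by rw [equ]; ring)) hpx hpxx
      (fun x => (hsol.reg_phi_time x).continuous) bn (fun t x => (bu t x).trans (by linarith)) ?_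
    intro t x
    have h1 := bw _ (bn t x)
    have h2 : (k + θ) * |n t x| ≤ (k + θ) * d :=
      mul_le_mul_of_nonneg_left (bn t x) (by linarith)
    have h3 : u t x ^ 2 ≤ 1 := by
      have := abs_le.1 (bu t x)
      nlinarith
    have h4 := abs_le.1 (h1.trans (h2.trans hdk))
    have h5 := sq_nonneg (u t x)
    rw [abs_le]
    constructor <;> linarith
  have iφ : ∀ t, Integrable (fun x => φ t x ^ 2 + px t x ^ 2) := fun t =>
    phi_L2 (hpx t) (hpxx t) (cn1 t) (fun x => (bφ t x).trans (by linarith))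
      (fun x => (bn t x).trans (by linarith)) (fn t).1
  have bφ2 : ∀ t, ∫ x, (φ t x ^ 2 + px t x ^ 2) ≤ 8 * ∫ x, n t x ^ 2 := by
    intro t
    have h1 := phi_weighted (χ := fun _ => 1) (χ1 := fun _ => 0) (hpx t) (hpxx t) (cn1 t)
      (fun x => (bφ t x).trans (by linarith)) (fn t).1 (iφ t) (fun x => hasDerivAt_const x 1)
      continuous_const (by simp) (by simp) (by simp)
    simp only [one_mul] at h1
    have h2 : ∫ x, (φ t x ^ 2 + px t x ^ 2) ≤ ∫ x, 4 * (px t x ^ 2 / 2 + φ t x ^ 2 / 4) := by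
      refine integral_mono_of_nonneg (Filter.Eventually.of_forall fun x => by positivity) ?_
        (Filter.Eventually.of_forall fun x => ?_)
      · have cφ : Continuous (φ t) := (hsol.reg_phi_space t).continuous
        have cp : Continuous (px t) := cpx.comp (Continuous.prodMk_right t)
        refine ((iφ t).const_mul 2).mono' (by fun_prop) (Filter.Eventually.of_forall fun x => ?_)
        rw [Real.norm_eq_abs, abs_of_nonneg (by positivity)]
        nlinarith [sq_nonneg (φ t x), sq_nonneg (px t x)]
      · simp only
        nlinarith [sq_nonneg (φ t x), sq_nonneg (px t x)]
    rw [integral_const_mul] at h2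
    linarith
  have M1 : M0 ≤ max M0 20 := le_max_left _ _
  have M2 : (20:ℝ) ≤ max M0 20 := le_max_right _ _
  set M := max M0 20 with hM
  have j1 : ∀ t, Integrable (fun x => n t x ^ 2 + u t x ^ 2) := fun t => (fn t).1.add (fu t).1
  have j2 : ∀ t, Integrable (fun x => n t x ^ 2 + u t x ^ 2 + nx t x ^ 2) :=
    fun t => (j1 t).add (fn t).2.1
  have j3 : ∀ t, Integrable (fun x => n t x ^ 2 + u t x ^ 2 + nx t x ^ 2 + ux t x ^ 2) :=
    fun t => (j2 t).add (fu t).2.1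
  have j4 : ∀ t, Integrable (fun x => (n t x ^ 2 + u t x ^ 2 + nx t x ^ 2 + ux t x ^ 2) +
    (φ t x ^ 2 + px t x ^ 2)) := fun t => (j3 t).add (iφ t)
  have ej : ∀ t, (fun x => n t x ^ 2 + u t x ^ 2 + nx t x ^ 2 + ux t x ^ 2 + φ t x ^ 2
    + px t x ^ 2) = (fun x => (n t x ^ 2 + u t x ^ 2 + nx t x ^ 2 + ux t x ^ 2) +
    (φ t x ^ 2 + px t x ^ 2)) := fun t => by funext x; ring
  have hP : Pack w (wdf p) (Wfun w) n u φ nt nx ut ux px M :=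
    { M1 := by linarith
      cn := cn, cu := cu, cnt := cnt, cnx := cnx, cut := cut, cux := cux, cpx := cpx
      hnt := hnt, hnx := hnx, hut := hut, hux := hux, hpx := hpx, hpxx := hpxx
      eqn := eqn, equ := equ
      bn := fun t x => (bn t x).trans (by linarith)
      bu := fun t x => (bu t x).trans (by linarith)
      bφ := fun t x => (bφ t x).trans (by linarith)
      hw := fun a ha => (wf a ha).1
      hW := fun a ha => (wf a ha).2.1
      bw := fun a ha => (wf a ha).2.2.1.trans (mul_le_mul_of_nonneg_right M1 (abs_nonneg _))
      bW0 := fun a ha => (wf a ha).2.2.2.1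
      bW := fun a ha => (wf a ha).2.2.2.2.1.trans (mul_le_mul_of_nonneg_right M1 (sq_nonneg _))
      bwd := fun a ha => (wf a ha).2.2.2.2.2.trans M1
      hS := fun t => by rw [ej]; exact j4 t
      bS := fun t => by
        rw [ej, integral_add (j3 t) (iφ t), integral_add (j2 t) (fu t).2.1,
          integral_add (j1 t) (fn t).2.1, integral_add (fn t).1 (fu t).1]
        have a1 := (fn t).2.2.1
        have a2 := (fu t).2.2.1
        have a3 := bφ2 t
        have a4 : 0 ≤ ∫ x, nx t x ^ 2 := integral_nonneg (fun x => sq_nonneg _)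
        have a5 : d ^ 2 ≤ 1 := by nlinarith
        linarith }
  have bW : ∀ t x, (k - θ) / 2 * n t x ^ 2 ≤ Wfun w (n t x) := by
    intro t x
    have h1 := tool_taylor (G := Wfun w) (g := w) (β := k) (θ := θ) (d := d)
      (by simp [Wfun]) (fun a ha => (wf a (ha.trans (by linarith))).2.1) hloc (n t x) (bn t x)
    have := (abs_le.1 h1).1
    linarith
  have s0p : 0 < √(1 + k) := Real.sqrt_pos.2 (by linarith)
  have σp : 0 < √(1 + k) + ε := by linarith
  have P2 : ∀ t x, √(1 + k) / 2 * φ t x ^ 2 ≤ (√(1 + k) + ε) * Rex (φ t x) := fun t x =>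
    pointwise_P2 σp hθ ((bφ t x).trans (by linarith)) ((bφ t x).trans (by linarith)) hs
  have ee : ∀ t, energy w (n t) (u t) (φ t) = ∫ x, Pack.EE (Wfun w) n u φ px t x := by
    intro t
    unfold energy
    refine integral_congr_ae (Filter.Eventually.of_forall fun x => ?_)
    simp only [energyDensity, Rfun_eq, Pack.EE, Pack.HD, Pack.PE, hpxdef]
    ring
  have hder : ∀ t, HasDerivAt (fun t => y t - c * t) (deriv y t - c) t := fun t =>
    ((hy.differentiable (by norm_num) t).hasDerivAt.sub ((hasDerivAt_id t).const_mul c)).congr_deriv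
      (by simp)
  have ymono : Monotone (fun t => y t - c * t) := by
    refine monotone_of_deriv_nonneg (fun t => (hder t).differentiableAt) (fun t => ?_)
    rw [(hder t).deriv]
    linarith [hyc t]
  have cσ : 0 < c - (√(1 + k) + ε) := by linarith
  refine hP.vanish_nu (c := (k - θ) / 2) (by linarith) s0p σp bW P2 ?_
  refine hP.vanish hθ hθ2 s0p σp (fun t x => ?_) P2 (y := y) (fun t1 t2 => ?_) hcpt ?_ ?_
  · exact pointwise_P1 hθ hθ2 s0p σp hθk hA hF ((bn t x).trans hdθ) ((bu t x).trans hdθ)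
      (bw _ (bn t x)) (bW t x)
  · rw [← ee, ← ee]; exact hcons t1 t2
  · intro A
    obtain ⟨m, hm⟩ := exists_nat_ge ((A - y 0) / (c - (√(1 + k) + ε)))
    refine ⟨m + 1, by positivity, ?_⟩
    have h1 := ymono (show (0:ℝ) ≤ m + 1 by positivity)
    rw [div_le_iff₀ cσ] at hm
    simp only at h1
    nlinarith
  · intro A
    obtain ⟨m, hm⟩ := exists_nat_ge ((y 0 - A) / (c - (√(1 + k) + ε)))
    refine ⟨-(m + 1), by linarith [(Nat.cast_nonneg m : (0:ℝ) ≤ m)], ?_⟩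
    have h1 := ymono (show -((m:ℝ) + 1) ≤ 0 by linarith [(Nat.cast_nonneg m : (0:ℝ) ≤ m)])
    rw [div_le_iff₀ cσ] at hm
    simp only at h1
    nlinarith



lemma reverse_sol {w : ℝ → ℝ} {n u φ : ℝ → ℝ → ℝ} (h : IsEPwSolution w n u φ) :
    IsEPwSolution w (fun t x => n (-t) x) (fun t x => -u (-t) x) (fun t x => φ (-t) x) where
  dens_pos t x := h.dens_pos (-t) x
  reg_n := h.reg_n.comp (f := fun z : ℝ × ℝ => (-z.1, z.2)) (by fun_prop)
  reg_u := (h.reg_u.comp (f := fun z : ℝ × ℝ => (-z.1, z.2)) (by fun_prop)).neg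
  reg_phi_space t := h.reg_phi_space (-t)
  reg_phi_time x := (h.reg_phi_time x).comp (f := fun t : ℝ => -t) (by fun_prop)
  eq_n t x := by
    have h1 := h.eq_n (-t) x
    rw [deriv_comp_neg (fun s => n s x) t, h1]
    have e : (fun z => (1 + n (-t) z) * -u (-t) z) = fun z => -((1 + n (-t) z) * u (-t) z) := by
      funext z; ring
    rw [e, deriv.fun_neg]
  eq_u t x := by
    have h1 := h.eq_u (-t) x
    rw [deriv.fun_neg, deriv_comp_neg (fun s => u s x) t, h1]
    simp only [neg_sq, neg_neg]
  eq_phi t x := h.eq_phi (-t) x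

lemma H1norm_neg (f : ℝ → ℝ) : H1norm (fun x => -f x) = H1norm f := by
  have e : (fun x => -f x) = -f := rfl
  have e2 : deriv (fun x => -f x) = -deriv f := by
    funext x; simp
  unfold H1norm
  rw [e2, e, eLpNorm_neg, eLpNorm_neg]

theorem nonexistence_fast_compact
    (p w : ℝ → ℝ) (hp : IsPressure p) (hw : IsWFor p w)
    (k : ℝ) (hk : k = deriv p 1)
    (ε : ℝ) (hε : 0 < ε) :
    ∃ δ : ℝ, 0 < δ ∧
      ∀ (n u φ : ℝ → ℝ → ℝ) (y : ℝ → ℝ),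
        IsEPwSolution w n u φ →
        ContDiff ℝ 1 y →
        L2CompactWith n u y →
        ConservesEnergy w n u φ →
        (∃ c : ℝ, Real.sqrt (1 + k) + ε < c ∧ ∀ t : ℝ, c ≤ |deriv y t|) →
        (⨆ t : ℝ, (H1norm (n t) + H1norm (u t))) < ENNReal.ofReal δ →
        ∀ t x : ℝ, n t x = 0 ∧ u t x = 0 ∧ φ t x = 0 := by
  have hk0 : 0 < k := by rw [hk]; exact hp.deriv_pos 1 one_pos
  obtain ⟨θ, hθ, hθ2, hθk, hA, hF, hs⟩ := params hk0 hε
  obtain ⟨d0, hd0, hloc⟩ := wlocal hw hk hθ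
  have kp : 0 < 2 * (k + θ) := by linarith
  refine ⟨min (min d0 (1/8)) (min θ (1 / (2 * (k + θ)))), by positivity, ?_⟩
  have b1 : min (min d0 (1/8)) (min θ (1 / (2 * (k + θ)))) ≤ d0 :=
    (min_le_left _ _).trans (min_le_left _ _)
  have b2 : min (min d0 (1/8)) (min θ (1 / (2 * (k + θ)))) ≤ 1/8 :=
    (min_le_left _ _).trans (min_le_right _ _)
  have b3 : min (min d0 (1/8)) (min θ (1 / (2 * (k + θ)))) ≤ θ :=
    (min_le_right _ _).trans (min_le_left _ _)
  have b4 : min (min d0 (1/8)) (min θ (1 / (2 * (k + θ)))) ≤ 1 / (2 * (k + θ)) :=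
    (min_le_right _ _).trans (min_le_right _ _)
  have b0 : 0 < min (min d0 (1/8)) (min θ (1 / (2 * (k + θ)))) := by positivity
  set d := min (min d0 (1/8)) (min θ (1 / (2 * (k + θ))))
  have b5 : (k + θ) * d ≤ 1/2 := by
    rw [le_div_iff₀ kp] at b4
    linarith
  intro n u φ y hsol hy hcpt hcons ⟨c, hc, hyc⟩ hsup
  have hh : ∀ t, H1norm (n t) + H1norm (u t) ≤ ENNReal.ofReal d := fun t =>
    (le_iSup (fun t => H1norm (n t) + H1norm (u t)) t).trans hsup.le
  have hn1 : ∀ t, H1norm (n t) ≤ ENNReal.ofReal d := fun t => le_self_add.trans (hh t)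
  have hu1 : ∀ t, H1norm (u t) ≤ ENNReal.ofReal d := fun t => le_add_self.trans (hh t)
  have c0 : 0 < c := by linarith [Real.sqrt_nonneg (1 + k)]
  have cy : Continuous (deriv y) := hy.continuous_deriv (by norm_num)
  have sgn : (∀ t, c ≤ deriv y t) ∨ (∀ t, deriv y t ≤ -c) := by
    by_contra hcon
    push Not at hcon
    obtain ⟨⟨t1, h1⟩, ⟨t2, h2⟩⟩ := hcon
    have h3 : deriv y t1 ≤ 0 := by
      by_contra h
      push Not at h
      have := hyc t1
      rw [abs_of_pos h] at this
      linarith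
    have h4 : 0 ≤ deriv y t2 := by
      by_contra h
      push Not at h
      have := hyc t2
      rw [abs_of_neg h] at this
      linarith
    obtain ⟨t, ht⟩ := mem_range_of_exists_le_of_exists_ge cy ⟨t1, h3⟩ ⟨t2, h4⟩
    have := hyc t
    rw [ht, abs_zero] at this
    linarith
  rcases sgn with h | h
  · exact fast_pos hp hw hk0 hε hθ hθ2 hθk hA hF hs b0 b2 b3 b5
      (fun a ha => hloc a (ha.trans b1)) hsol hy hcpt hcons hc h hn1 hu1
  · have key := fast_pos hp hw hk0 hε hθ hθ2 hθk hA hF hs b0 b2 b3 b5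
      (fun a ha => hloc a (ha.trans b1)) (reverse_sol hsol) (y := fun t => y (-t))
      (hy.comp (f := fun t : ℝ => -t) (by fun_prop))
      (by
        intro e he
        obtain ⟨R, hR, hb⟩ := hcpt e he
        refine ⟨R, hR, fun t => ?_⟩
        simpa only [neg_sq] using hb (-t))
      (by
        intro t1 t2
        have := hcons (-t1) (-t2)
        simpa only [energy, energyDensity, neg_sq] using this)
      hc
      (fun t => by
        rw [deriv_comp_neg]
        linarith [h (-t)])
      (fun t => hn1 (-t))
      (fun t => by rw [H1norm_neg]; exact hu1 (-t))
    intro t x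
    have h1 := key (-t) x
    simp only [neg_neg, neg_eq_zero] at h1
    exact h1
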